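/- arXiv:1604.04071 — 6 statements merged into one kernel-verified Lean document; each statement's English description precedes it below -/
import Mathlib

section
/- Let U be a connected open subset of ℂ with U ≠ ℂ. If U is holomorphically simply connected, then U is biholomorphic to the open unit disc D = {z ∈ ℂ : |z| < 1}; that is, there exists a holomorphic function from U onto D that is bijective and whose inverse is holomorphic. -/
/-- An open set `U ⊆ ℂ` is *holomorphically simply connected* if every
holomorphic function on `U` has a holomorphic antiderivative on `U`. -/
def HolSC (U : Set ℂ) : Prop :=
  ∀ f : ℂ → ℂ, DifferentiableOn ℂ f U →
    ∃ F : ℂ → ℂ, DifferentiableOn ℂ F U ∧ ∀ z ∈ U, HasDerivAt F (f z) z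

open Filter Topology Metric Set

/-- **Hurwitz's theorem**, local form: if holomorphic functions converge locally uniformly to `f`
and `f` has an isolated zero at `a`, then eventually they have zeros arbitrarily close to `a`. -/
theorem TendstoLocallyUniformlyOn.eventually_exists_eq_zero {ι : Type*} {l : Filter ι} [l.NeBot]
    {F : ι → ℂ → ℂ} {f : ℂ → ℂ} {U V : Set ℂ} {a : ℂ} (hF : TendstoLocallyUniformlyOn F f l U)
    (hU : IsOpen U) (hFd : ∀ n, DifferentiableOn ℂ (F n) U) (ha : a ∈ U) (hfa : f a = 0)
    (hf : ¬ ∀ᶠ z in 𝓝 a, f z = 0) (hV : V ∈ 𝓝 a) :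
    ∀ᶠ n in l, ∃ z ∈ V, F n z = 0 := by
  have hfd : DifferentiableOn ℂ f U := hF.differentiableOn (.of_forall hFd) hU
  have hne := ((hfd.analyticOnNhd hU a ha).eventually_eq_zero_or_eventually_ne_zero).resolve_left hf
  rw [eventually_nhdsWithin_iff] at hne
  obtain ⟨r, hr, hrs⟩ := Metric.nhds_basis_closedBall.mem_iff.1
    (inter_mem (inter_mem hne hV) (hU.mem_nhds ha))
  have hrU : closedBall a r ⊆ U := fun z hz ↦ (hrs hz).2
  obtain ⟨m, hm, hmf⟩ : ∃ m > 0, ∀ z ∈ sphere a r, m ≤ ‖f z‖ := by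
    obtain ⟨x, hx, hmin⟩ := (isCompact_sphere a r).exists_isMinOn
      (NormedSpace.sphere_nonempty.2 hr.le)
      ((hfd.continuousOn.mono (sphere_subset_closedBall.trans hrU)).norm)
    have hxa : x ≠ a := ne_of_mem_sphere hx hr.ne'
    exact ⟨‖f x‖, norm_pos_iff.2 ((hrs (sphere_subset_closedBall hx)).1.1 hxa), hmin⟩
  have hunif := Metric.tendstoUniformlyOn_iff.1 ((tendstoLocallyUniformlyOn_iff_forall_isCompact
    hU).1 hF _ hrU (isCompact_closedBall a r)) (m / 3) (by positivity)
  filter_upwards [hunif] with n hn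
  by_contra! hz
  have hnz : ∀ z ∈ closedBall a r, F n z ≠ 0 := fun z hzr ↦ hz z (hrs hzr).1.2
  have hd : DiffContOnCl ℂ (fun z ↦ (F n z)⁻¹) (ball a r) := by
    apply DifferentiableOn.diffContOnCl
    rw [closure_ball a hr.ne']
    exact ((hFd n).mono hrU).inv hnz
  have hbound : ∀ z ∈ frontier (ball a r), ‖(F n z)⁻¹‖ ≤ (2 * m / 3)⁻¹ := by
    intro z hzr
    rw [frontier_ball a hr.ne'] at hzr
    have h1 := hn z (sphere_subset_closedBall hzr)
    rw [dist_eq_norm] at h1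
    have h2 := norm_sub_norm_le (f z) (F n z)
    rw [norm_inv]
    apply inv_anti₀ (by positivity)
    linarith [hmf z hzr]
  have hmax := Complex.norm_le_of_forall_mem_frontier_norm_le isBounded_ball hd hbound
    (subset_closure (mem_ball_self hr))
  have hap : 0 < ‖F n a‖ := norm_pos_iff.2 (hnz a (mem_closedBall_self hr.le))
  rw [norm_inv, inv_le_inv₀ hap (by positivity)] at hmax
  have h3 := hn a (mem_closedBall_self hr.le)
  rw [hfa, dist_zero_left] at h3
  linarith

/-- **Montel's theorem** along an ultrafilter: holomorphic functions with values in the unit disc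
converge locally uniformly along every ultrafilter. -/
theorem exists_tendstoLocallyUniformlyOn_of_mapsTo_ball {ι : Type*} (l : Ultrafilter ι)
    {F : ι → ℂ → ℂ} {U : Set ℂ} (hU : IsOpen U) (hFd : ∀ n, DifferentiableOn ℂ (F n) U)
    (hF : ∀ n, MapsTo (F n) U (ball 0 1)) :
    ∃ f : ℂ → ℂ, TendstoLocallyUniformlyOn F f l U ∧ ∀ z ∈ U, Tendsto (F · z) l (𝓝 (f z)) := by
  have hlim : ∀ z, ∃ w, z ∈ U → Tendsto (F · z) l (𝓝 w) := by
    intro z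
    by_cases hz : z ∈ U
    · obtain ⟨w, -, hw⟩ := (isCompact_closedBall (0 : ℂ) 1).ultrafilter_le_nhds (l.map (F · z))
        (by
          rw [le_principal_iff]
          exact Eventually.of_forall (f := (l : Filter ι)) fun n ↦ ball_subset_closedBall (hF n hz))
      exact ⟨w, fun _ ↦ hw⟩
    · exact ⟨0, fun h ↦ absurd h hz⟩
  choose f hf using hlim
  refine ⟨f, Metric.tendstoLocallyUniformlyOn_iff.2 fun ε hε x hx ↦ ?_, hf⟩
  obtain ⟨r, hr, hrU⟩ := Metric.isOpen_iff.1 hU x hx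
  have hlip : ∀ n, ∀ z ∈ ball x r, dist (F n z) (F n x) ≤ 2 / r * dist z x := by
    intro n z hz
    refine Complex.dist_le_div_mul_dist_of_mapsTo_ball ((hFd n).mono hrU) (fun y hy ↦ ?_) hz
    have h1 := hF n (hrU hy)
    have h2 := hF n hx
    rw [mem_ball] at h1 h2
    rw [mem_closedBall]
    linarith [dist_triangle_right (F n y) (F n x) 0]
  have hlim_lip : ∀ z ∈ ball x r, dist (f z) (f x) ≤ 2 / r * dist z x := fun z hz ↦
    le_of_tendsto ((hf z (hrU hz)).dist (hf x hx)) (.of_forall fun n ↦ hlip n z hz)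
  have hδ : 0 < min r (r / 2 * (ε / 4)) := by positivity
  refine ⟨ball x (min r (r / 2 * (ε / 4))), mem_nhdsWithin_of_mem_nhds (ball_mem_nhds x hδ), ?_⟩
  filter_upwards [Metric.tendsto_nhds.1 (hf x hx) (ε / 4) (by positivity)] with n hn y hy
  have hyr : y ∈ ball x r := ball_subset_ball (min_le_left _ _) hy
  have hy2 : 2 / r * dist y x ≤ ε / 4 := by
    have : dist y x ≤ r / 2 * (ε / 4) := (mem_ball.1 hy).le.trans (min_le_right _ _)
    calc 2 / r * dist y x ≤ 2 / r * (r / 2 * (ε / 4)) := by gcongr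
      _ = ε / 4 := by field_simp
  have h1 := hlip n y hyr
  have h2 := hlim_lip y hyr
  have h3 := dist_triangle4 (f y) (f x) (F n x) (F n y)
  rw [dist_comm (f x), dist_comm (F n x) (F n y)] at h3
  linarith

/-- On a connected holomorphically simply connected open set, every nowhere vanishing holomorphic
function has a holomorphic square root. -/
theorem HolSC.exists_sq_eq {U : Set ℂ} (hU : HolSC U) (hUo : IsOpen U) (hUc : IsConnected U)
    {h : ℂ → ℂ} (hh : DifferentiableOn ℂ h U) (h0 : ∀ z ∈ U, h z ≠ 0) :
    ∃ s : ℂ → ℂ, DifferentiableOn ℂ s U ∧ ∀ z ∈ U, s z ^ 2 = h z := by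
  obtain ⟨x, hx⟩ := hUc.nonempty
  obtain ⟨L, hLd, hL⟩ := hU (fun z ↦ deriv h z / h z) ((hh.deriv hUo).div hh h0)
  have hconst : ∀ z ∈ U, h z * Complex.exp (-L z) = h x * Complex.exp (-L x) := by
    intro z hz
    refine hUo.is_const_of_deriv_eq_zero hUc.isPreconnected (f := fun z ↦ h z * Complex.exp (-L z))
      (hh.mul hLd.neg.cexp) (fun y hy ↦ ?_) hz hx
    have hd := (hh.differentiableAt (hUo.mem_nhds hy)).hasDerivAt.mul (hL y hy).neg.cexp
    refine hd.deriv.trans ?_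
    have := h0 y hy
    simp only [Pi.zero_apply]
    field_simp
    ring
  have hc : h x * Complex.exp (-L x) ≠ 0 := mul_ne_zero (h0 x hx) (Complex.exp_ne_zero _)
  refine ⟨fun z ↦ Complex.exp ((L z + Complex.log (h x * Complex.exp (-L x))) / 2),
    ((hLd.add_const _).div_const _).cexp, fun z hz ↦ ?_⟩
  rw [← Complex.exp_nat_mul, Nat.cast_ofNat, mul_div_cancel₀ _ two_ne_zero, Complex.exp_add,
    Complex.exp_log hc, ← hconst z hz, mul_left_comm, ← Complex.exp_add, add_neg_cancel,
    Complex.exp_zero, mul_one]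

/-- Injective holomorphic maps from `U` to the unit disc with nowhere vanishing derivative. -/
structure IsDiscEmbedding (U : Set ℂ) (f : ℂ → ℂ) : Prop where
  differentiableOn : DifferentiableOn ℂ f U
  mapsTo : MapsTo f U (ball 0 1)
  injOn : InjOn f U
  deriv_ne_zero : ∀ z ∈ U, deriv f z ≠ 0

/-- The Blaschke factor, the automorphism of the unit disc that sends `a` to `0`. -/
noncomputable def blaschkeFactor (a z : ℂ) : ℂ := (z - a) / (1 - starRingEnd ℂ a * z)

theorem one_sub_conj_mul_ne_zero {a z : ℂ} (ha : ‖a‖ < 1) (hz : ‖z‖ < 1) :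
    1 - starRingEnd ℂ a * z ≠ 0 := by
  intro h
  have h1 : ‖starRingEnd ℂ a * z‖ = 1 := by rw [← sub_eq_zero.1 h, norm_one]
  rw [norm_mul, Complex.norm_conj] at h1
  nlinarith [norm_nonneg a, norm_nonneg z]

theorem norm_blaschkeFactor_lt_one {a z : ℂ} (ha : ‖a‖ < 1) (hz : ‖z‖ < 1) :
    ‖blaschkeFactor a z‖ < 1 := by
  rw [blaschkeFactor, norm_div, div_lt_one (norm_pos_iff.2 (one_sub_conj_mul_ne_zero ha hz)),
    ← sq_lt_sq₀ (norm_nonneg _) (norm_nonneg _)]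
  have h1 : 0 < 1 - ‖a‖ ^ 2 := by nlinarith [norm_nonneg a]
  have h2 : 0 < 1 - ‖z‖ ^ 2 := by nlinarith [norm_nonneg z]
  have h3 := mul_pos h1 h2
  simp only [← Complex.normSq_eq_norm_sq, Complex.normSq_apply, Complex.sub_re, Complex.sub_im,
    Complex.one_re, Complex.one_im, Complex.mul_re, Complex.mul_im, Complex.conj_re,
    Complex.conj_im] at h3 ⊢
  linarith

theorem hasDerivAt_blaschkeFactor {a z : ℂ} (ha : ‖a‖ < 1) (hz : ‖z‖ < 1) :
    HasDerivAt (blaschkeFactor a) ((1 - ‖a‖ ^ 2) / (1 - starRingEnd ℂ a * z) ^ 2) z := by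
  have hd := ((hasDerivAt_id z).sub_const a).div
    (((hasDerivAt_id z).const_mul (starRingEnd ℂ a)).const_sub 1) (one_sub_conj_mul_ne_zero ha hz)
  refine hd.congr_deriv ?_
  rw [← Complex.conj_mul']
  simp only [id]
  ring

theorem one_sub_norm_sq_ne_zero {a : ℂ} (ha : ‖a‖ < 1) : (1 - ‖a‖ ^ 2 : ℂ) ≠ 0 := by
  have : (1 - ‖a‖ ^ 2 : ℝ) ≠ 0 := by nlinarith [norm_nonneg a]
  exact_mod_cast this

theorem injOn_blaschkeFactor {a : ℂ} (ha : ‖a‖ < 1) : InjOn (blaschkeFactor a) (ball 0 1) := by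
  intro z hz w hw h
  rw [mem_ball_zero_iff] at hz hw
  rw [blaschkeFactor, blaschkeFactor, div_eq_div_iff (one_sub_conj_mul_ne_zero ha hz)
    (one_sub_conj_mul_ne_zero ha hw)] at h
  have h1 : (1 - ‖a‖ ^ 2 : ℂ) * (z - w) = 0 := by
    rw [← Complex.conj_mul']
    linear_combination h
  exact sub_eq_zero.1 ((mul_eq_zero.1 h1).resolve_left (one_sub_norm_sq_ne_zero ha))

theorem two_mul_mul_deriv_of_sq_eq {U : Set ℂ} {h s : ℂ → ℂ} {z : ℂ}
    (hU : IsOpen U) (hs : DifferentiableOn ℂ s U) (hsq : ∀ z ∈ U, s z ^ 2 = h z) (hz : z ∈ U) :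
    2 * s z * deriv s z = deriv h z := by
  have h1 := ((hs.differentiableAt (hU.mem_nhds hz)).hasDerivAt).pow 2
  have h2 : h =ᶠ[𝓝 z] s ^ 2 := by
    filter_upwards [hU.mem_nhds hz] with y hy using (hsq y hy).symm
  rw [h2.deriv_eq, h1.deriv]
  simp

namespace IsDiscEmbedding

variable {U : Set ℂ} {f : ℂ → ℂ}

theorem norm_lt_one (hf : IsDiscEmbedding U f) {z : ℂ} (hz : z ∈ U) : ‖f z‖ < 1 :=
  mem_ball_zero_iff.1 (hf.mapsTo hz)

theorem hasDerivAt (hf : IsDiscEmbedding U f) (hU : IsOpen U) {z : ℂ} (hz : z ∈ U) :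
    HasDerivAt f (deriv f z) z :=
  (hf.differentiableOn.differentiableAt (hU.mem_nhds hz)).hasDerivAt

theorem hasDerivAt_blaschkeFactor_comp (hf : IsDiscEmbedding U f) (hU : IsOpen U) {a z : ℂ}
    (ha : ‖a‖ < 1) (hz : z ∈ U) :
    HasDerivAt (blaschkeFactor a ∘ f)
      ((1 - ‖a‖ ^ 2) / (1 - starRingEnd ℂ a * f z) ^ 2 * deriv f z) z :=
  (hasDerivAt_blaschkeFactor ha (hf.norm_lt_one hz)).comp z (hf.hasDerivAt hU hz)

theorem blaschkeFactor_comp (hf : IsDiscEmbedding U f) (hU : IsOpen U) {a : ℂ} (ha : ‖a‖ < 1) :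
    IsDiscEmbedding U (blaschkeFactor a ∘ f) where
  differentiableOn z hz :=
    (hf.hasDerivAt_blaschkeFactor_comp hU ha hz).differentiableAt.differentiableWithinAt
  mapsTo z hz := mem_ball_zero_iff.2 (norm_blaschkeFactor_lt_one ha (hf.norm_lt_one hz))
  injOn := (injOn_blaschkeFactor ha).comp hf.injOn hf.mapsTo
  deriv_ne_zero z hz := by
    rw [(hf.hasDerivAt_blaschkeFactor_comp hU ha hz).deriv]
    exact mul_ne_zero (div_ne_zero (one_sub_norm_sq_ne_zero ha)
      (pow_ne_zero _ (one_sub_conj_mul_ne_zero ha (hf.norm_lt_one hz)))) (hf.deriv_ne_zero z hz)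

theorem of_sq_eq {s : ℂ → ℂ} (hf : IsDiscEmbedding U f) (hU : IsOpen U)
    (hs : DifferentiableOn ℂ s U) (hsq : ∀ z ∈ U, s z ^ 2 = f z) : IsDiscEmbedding U s where
  differentiableOn := hs
  mapsTo z hz := by
    have h1 := hf.norm_lt_one hz
    rw [← hsq z hz, norm_pow] at h1
    rw [mem_ball_zero_iff]
    nlinarith [norm_nonneg (s z)]
  injOn z hz w hw h := hf.injOn hz hw (by rw [← hsq z hz, ← hsq w hw, h])
  deriv_ne_zero z hz h := by
    apply hf.deriv_ne_zero z hz
    rw [← two_mul_mul_deriv_of_sq_eq hU hs hsq hz, h, mul_zero]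

/-- Koebe's square root trick: a disc embedding `f` with `f x = 0` that misses a
point of the disc can be replaced by one with a larger derivative at `x`. -/
theorem exists_norm_deriv_lt (hf : IsDiscEmbedding U f) (hUo : IsOpen U) (hUc : IsConnected U)
    (hU : HolSC U) {x w : ℂ} (hx : x ∈ U) (hfx : f x = 0) (hw : ‖w‖ < 1) (hwf : w ∉ f '' U) :
    ∃ k, IsDiscEmbedding U k ∧ k x = 0 ∧ ‖deriv f x‖ < ‖deriv k x‖ := by
  have hh := hf.blaschkeFactor_comp hUo hw
  have hh0 : ∀ z ∈ U, (blaschkeFactor w ∘ f) z ≠ 0 := by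
    intro z hz
    refine div_ne_zero (sub_ne_zero.2 fun h ↦ hwf ⟨z, hz, h⟩)
      (one_sub_conj_mul_ne_zero hw (hf.norm_lt_one hz))
  obtain ⟨s, hsd, hsq⟩ := hU.exists_sq_eq hUo hUc hh.differentiableOn hh0
  have hs := hh.of_sq_eq hUo hsd hsq
  have hsx := hs.norm_lt_one hx
  refine ⟨_, hs.blaschkeFactor_comp hUo hsx, by simp [blaschkeFactor], ?_⟩
  have hds := two_mul_mul_deriv_of_sq_eq hUo hsd hsq hx
  rw [(hf.hasDerivAt_blaschkeFactor_comp hUo hw hx).deriv, hfx, mul_zero, sub_zero, one_pow,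
    div_one] at hds
  have hsw : ‖s x‖ ^ 2 = ‖w‖ := by
    rw [← norm_pow, hsq x hx]
    simp [blaschkeFactor, hfx]
  have hs0 : 0 < ‖s x‖ := by
    refine norm_pos_iff.2 fun h ↦ hh0 x hx ?_
    rw [← hsq x hx, h, zero_pow two_ne_zero]
  have hnorm : 2 * ‖s x‖ * ‖deriv s x‖ = (1 - ‖w‖ ^ 2) * ‖deriv f x‖ := by
    have h1 := congrArg norm hds
    have h2 : ‖(1 - ‖w‖ ^ 2 : ℂ)‖ = 1 - ‖w‖ ^ 2 := by
      have : (0 : ℝ) ≤ 1 - ‖w‖ ^ 2 := by nlinarith [norm_nonneg w]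
      rw [← Real.norm_of_nonneg this, ← Complex.norm_real]
      simp
    simpa [h2] using h1
  rw [(hs.hasDerivAt_blaschkeFactor_comp hUo hsx hx).deriv, Complex.conj_mul', norm_mul, norm_div,
    norm_pow, sq ‖(1 - ‖s x‖ ^ 2 : ℂ)‖, div_mul_eq_mul_div, mul_comm, mul_div_mul_right _ _
    (norm_ne_zero_iff.2 (one_sub_norm_sq_ne_zero hsx))]
  have hpos : (0 : ℝ) < 1 - ‖s x‖ ^ 2 := by nlinarith
  have h3 : ‖(1 - ‖s x‖ ^ 2 : ℂ)‖ = 1 - ‖s x‖ ^ 2 := by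
    rw [← Real.norm_of_nonneg hpos.le, ← Complex.norm_real]
    simp
  rw [h3, lt_div_iff₀ hpos]
  rw [← hsw] at hnorm
  have hdf : 0 < ‖deriv f x‖ := norm_pos_iff.2 (hf.deriv_ne_zero x hx)
  have h4 : 0 < ‖deriv f x‖ * (1 - ‖s x‖ ^ 2) * (1 - ‖s x‖) ^ 2 := by
    have : 0 < 1 - ‖s x‖ := by linarith
    positivity
  have h5 : ‖deriv f x‖ * (1 - ‖s x‖ ^ 2) * (2 * ‖s x‖) < ‖deriv s x‖ * (2 * ‖s x‖) := by
    linarith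
  exact lt_of_mul_lt_mul_right h5 (by positivity)

/-- A proper connected open subset that is holomorphically simply connected embeds into the disc. -/
theorem exists_of_holSC (hUo : IsOpen U) (hUc : IsConnected U) (hU : HolSC U) (hne : U ≠ univ) :
    ∃ f, IsDiscEmbedding U f := by
  obtain ⟨a, ha⟩ := (ne_univ_iff_exists_notMem U).1 hne
  obtain ⟨x, hx⟩ := hUc.nonempty
  have hsub : ∀ z ∈ U, z - a ≠ 0 := fun z hz h ↦ ha (sub_eq_zero.1 h ▸ hz)
  obtain ⟨s, hsd, hsq⟩ := hU.exists_sq_eq hUo hUc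
    (h := fun z ↦ z - a) (by fun_prop) hsub
  have hs0 : ∀ z ∈ U, s z ≠ 0 := by
    intro z hz h
    apply hsub z hz
    rw [← hsq z hz, h, zero_pow two_ne_zero]
  have hds0 : ∀ z ∈ U, deriv s z ≠ 0 := by
    intro z hz h
    have h1 := two_mul_mul_deriv_of_sq_eq hUo hsd hsq hz
    simp [h] at h1
  have himage : s '' U ∈ 𝓝 (s x) := by
    rw [← ((hsd.analyticOnNhd hUo x hx).hasStrictDerivAt).map_nhds_eq (hds0 x hx)]
    exact image_mem_map (hUo.mem_nhds hx)
  obtain ⟨ε, hε, hball⟩ := Metric.mem_nhds_iff.1 himage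
  have hfar : ∀ z ∈ U, ε ≤ ‖s z + s x‖ := by
    intro z hz
    by_contra! hlt
    obtain ⟨y, hy, hyz⟩ := hball (show -s z ∈ ball (s x) ε by
      rwa [mem_ball, dist_eq_norm, ← norm_neg, neg_sub, sub_neg_eq_add, add_comm])
    have h1 : y = z := by
      have := hsq y hy
      rw [hyz, neg_sq, hsq z hz] at this
      linear_combination -this
    rw [h1] at hyz
    exact hs0 z hz (by linear_combination hyz / 2)
  have hne0 : ∀ z ∈ U, s z + s x ≠ 0 := fun z hz ↦ norm_pos_iff.1 (hε.trans_le (hfar z hz))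
  have hε0 : (ε / 2 : ℂ) ≠ 0 := by simpa using hε.ne'
  have hd : ∀ z ∈ U, HasDerivAt (fun z ↦ (ε / 2 : ℂ) * (s z + s x)⁻¹)
      ((ε / 2 : ℂ) * (-deriv s z / (s z + s x) ^ 2)) z := fun z hz ↦
    (((hsd.differentiableAt (hUo.mem_nhds hz)).hasDerivAt.add_const _).fun_inv
      (hne0 z hz)).const_mul _
  refine ⟨fun z ↦ (ε / 2 : ℂ) * (s z + s x)⁻¹,
    fun z hz ↦ (hd z hz).differentiableAt.differentiableWithinAt, fun z hz ↦ ?_,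
    fun z hz y hy h ↦ ?_, fun z hz ↦ ?_⟩
  · rw [mem_ball_zero_iff, norm_mul, norm_inv, ← div_eq_mul_inv,
      div_lt_one (hε.trans_le (hfar z hz))]
    have : ‖(ε / 2 : ℂ)‖ = ε / 2 := by simp [abs_of_pos hε]
    linarith [hfar z hz]
  · have h1 : s z = s y := by simpa using inv_injective (mul_left_cancel₀ hε0 h)
    have h2 := hsq z hz
    rw [h1, hsq y hy] at h2
    linear_combination -h2
  · rw [(hd z hz).deriv]
    exact mul_ne_zero hε0 (div_ne_zero (neg_ne_zero.2 (hds0 z hz)) (pow_ne_zero _ (hne0 z hz)))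

/-- Locally uniform limits of disc embeddings are disc embeddings, unless the derivative
degenerates. -/
theorem of_tendstoLocallyUniformlyOn {ι : Type*} {l : Filter ι} [l.NeBot] {F : ι → ℂ → ℂ}
    (hU : IsOpen U) (hUc : IsPreconnected U) (hF : ∀ n, IsDiscEmbedding U (F n))
    (h : TendstoLocallyUniformlyOn F f l U) {x : ℂ} (hx : x ∈ U) (hfx : deriv f x ≠ 0) :
    IsDiscEmbedding U f := by
  have hFd n := (hF n).differentiableOn
  have hfd : DifferentiableOn ℂ f U := h.differentiableOn (.of_forall hFd) hU
  have hconst : ∀ c, ¬ EqOn f (fun _ ↦ c) U := by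
    intro c hc
    apply hfx
    rw [(hc.eventuallyEq_of_mem (hU.mem_nhds hx)).deriv_eq, deriv_const]
  have hlim : ∀ z ∈ U, Tendsto (F · z) l (𝓝 (f z)) := fun z hz ↦ h.tendsto_at hz
  have hle : ∀ z ∈ U, ‖f z‖ ≤ 1 := fun z hz ↦
    le_of_tendsto (hlim z hz).norm (.of_forall fun n ↦ ((hF n).norm_lt_one hz).le)
  refine ⟨hfd, fun z hz ↦ ?_, fun a ha b hb hab ↦ ?_, fun z hz hz0 ↦ ?_⟩
  · rw [mem_ball_zero_iff]
    refine (hle z hz).lt_of_ne fun hz1 ↦ hconst (f z) ?_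
    exact Complex.eqOn_of_isPreconnected_of_isMaxOn_norm hUc hU hfd hz
      fun y hy ↦ (hle y hy).trans_eq hz1.symm
  · by_contra hne
    have hsub : TendstoLocallyUniformlyOn (fun n z ↦ F n z - F n a) (fun z ↦ f z - f a) l U := by
      refine h.sub ?_
      rw [Metric.tendstoLocallyUniformlyOn_iff]
      intro ε hε y hy
      refine ⟨univ, univ_mem, ?_⟩
      filter_upwards [Metric.tendsto_nhds.1 (hlim a ha) ε hε] with n hn y _
      rwa [dist_comm]
    have hev : ¬ ∀ᶠ z in 𝓝 b, f z - f a = 0 := fun hev ↦ hconst (f a) <|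
      (hfd.analyticOnNhd hU).eqOn_of_preconnected_of_eventuallyEq analyticOnNhd_const hUc hb
        (hev.mono fun z hz ↦ sub_eq_zero.1 hz)
    obtain ⟨n, z, ⟨hzU, hza⟩, hz⟩ := (hsub.eventually_exists_eq_zero hU
      (fun n ↦ (hFd n).sub_const _) hb (sub_eq_zero.2 hab.symm) hev
      (inter_mem (hU.mem_nhds hb) (isOpen_compl_singleton.mem_nhds (Ne.symm hne)))).exists
    exact hza ((hF n).injOn hzU ha (sub_eq_zero.1 hz))
  · have hev : ¬ ∀ᶠ y in 𝓝 z, deriv f y = 0 := fun hev ↦ hfx <|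
      ((hfd.deriv hU).analyticOnNhd hU).eqOn_of_preconnected_of_eventuallyEq
        analyticOnNhd_const hUc hz hev hx
    obtain ⟨n, y, hy, hy0⟩ := ((h.deriv (.of_forall hFd) hU).eventually_exists_eq_zero hU
      (fun n ↦ (hFd n).deriv hU) hz hz0 hev (hU.mem_nhds hz)).exists
    exact (hF n).deriv_ne_zero y hy hy0

/-- Among the disc embeddings vanishing at `x` there is one with maximal derivative at `x`. -/
theorem exists_forall_norm_deriv_le (hU : IsOpen U) (hUc : IsPreconnected U) {x : ℂ} (hx : x ∈ U)
    (hf : IsDiscEmbedding U f) :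
    ∃ g, IsDiscEmbedding U g ∧ g x = 0 ∧
      ∀ k, IsDiscEmbedding U k → k x = 0 → ‖deriv k x‖ ≤ ‖deriv g x‖ := by
  set S : Set ℝ := {t | ∃ k, IsDiscEmbedding U k ∧ k x = 0 ∧ ‖deriv k x‖ = t}
  obtain ⟨r, hr, hrU⟩ := Metric.isOpen_iff.1 hU x hx
  have hbdd : BddAbove S := by
    refine ⟨1 / r, ?_⟩
    rintro _ ⟨k, hk, hkx, rfl⟩
    refine Complex.norm_deriv_le_div_of_mapsTo_ball (hk.differentiableOn.mono hrU) ?_ hr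
    rw [hkx]
    exact fun z hz ↦ ball_subset_closedBall (hk.mapsTo (hrU hz))
  have hf' := hf.blaschkeFactor_comp hU (hf.norm_lt_one hx)
  have hmem : ‖deriv (blaschkeFactor (f x) ∘ f) x‖ ∈ S :=
    ⟨_, hf', by simp [blaschkeFactor], rfl⟩
  obtain ⟨u, -, hu, huS⟩ := exists_seq_tendsto_sSup ⟨_, hmem⟩ hbdd
  choose F hF hFx hFu using huS
  obtain ⟨g, hg, hglim⟩ := exists_tendstoLocallyUniformlyOn_of_mapsTo_ball (hyperfilter ℕ) hU
    (fun n ↦ (hF n).differentiableOn) (fun n ↦ (hF n).mapsTo)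
  have hderiv : ‖deriv g x‖ = sSup S := by
    have h1 := ((hg.deriv (.of_forall fun n ↦ (hF n).differentiableOn) hU).tendsto_at hx).norm
    refine tendsto_nhds_unique h1 ?_
    simp only [Function.comp_apply, hFu]
    exact hu.mono_left Nat.hyperfilter_le_atTop
  have hg0 : deriv g x ≠ 0 := by
    rw [← norm_pos_iff, hderiv]
    exact (norm_pos_iff.2 (hf'.deriv_ne_zero x hx)).trans_le (le_csSup hbdd hmem)
  refine ⟨g, of_tendstoLocallyUniformlyOn hU hUc hF hg hx hg0, ?_, fun k hk hkx ↦ ?_⟩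
  · refine tendsto_nhds_unique (hglim x hx) ?_
    simp only [hFx]
    exact tendsto_const_nhds
  · rw [hderiv]
    exact le_csSup hbdd ⟨k, hk, hkx, rfl⟩

/-- The inverse of a disc embedding is holomorphic on the image. -/
theorem differentiableOn_invFunOn (hf : IsDiscEmbedding U f) (hU : IsOpen U) :
    DifferentiableOn ℂ (Function.invFunOn f U) (f '' U) := by
  have hleft : LeftInvOn (Function.invFunOn f U) f U := hf.injOn.leftInvOn_invFunOn
  rintro _ ⟨z, hz, rfl⟩
  have hmap := ((hf.differentiableOn.analyticOnNhd hU z hz).hasStrictDerivAt).map_nhds_eq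
    (hf.deriv_ne_zero z hz)
  have hcont : ContinuousAt (Function.invFunOn f U) (f z) := by
    rw [ContinuousAt, ← hmap, hleft hz, tendsto_map'_iff]
    refine tendsto_id.congr' ?_
    filter_upwards [hU.mem_nhds hz] with y hy using (hleft hy).symm
  refine (HasDerivAt.of_local_left_inverse (f := f) (f' := deriv f z) hcont ?_
    (hf.deriv_ne_zero z hz) ?_).differentiableAt.differentiableWithinAt
  · rw [hleft hz]
    exact hf.hasDerivAt hU hz
  · rw [← hmap, eventually_map]
    filter_upwards [hU.mem_nhds hz] with y hy
    rw [hleft hy]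

end IsDiscEmbedding

/-- **The Riemann Mapping Theorem (Riemann's form).**
A connected open proper subset of `ℂ` that is holomorphically simply connected
is biholomorphic to the open unit disc. -/
theorem riemann_mapping_holSC (U : Set ℂ) (hUopen : IsOpen U) (hUconn : IsConnected U)
    (hUne : U ≠ Set.univ) (hU : HolSC U) :
    ∃ H G : ℂ → ℂ,
      DifferentiableOn ℂ H U ∧
      DifferentiableOn ℂ G (Metric.ball (0 : ℂ) 1) ∧
      Set.MapsTo H U (Metric.ball (0 : ℂ) 1) ∧
      Set.MapsTo G (Metric.ball (0 : ℂ) 1) U ∧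
      (∀ z ∈ U, G (H z) = z) ∧
      (∀ w ∈ Metric.ball (0 : ℂ) 1, H (G w) = w) := by
  obtain ⟨x, hx⟩ := hUconn.nonempty
  obtain ⟨f, hf⟩ := IsDiscEmbedding.exists_of_holSC hUopen hUconn hU hUne
  obtain ⟨g, hg, hgx, hmax⟩ := hf.exists_forall_norm_deriv_le hUopen hUconn.isPreconnected hx
  have hsurj : ball 0 1 ⊆ g '' U := by
    intro w hw
    by_contra hwg
    obtain ⟨k, hk, hkx, hlt⟩ := hg.exists_norm_deriv_lt hUopen hUconn hU hx hgx
      (mem_ball_zero_iff.1 hw) hwg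
    exact (hmax k hk hkx).not_gt hlt
  exact ⟨g, Function.invFunOn g U, hg.differentiableOn,
    (hg.differentiableOn_invFunOn hUopen).mono hsurj, hg.mapsTo,
    fun w hw ↦ Function.invFunOn_mem (hsurj hw), hg.injOn.leftInvOn_invFunOn,
    fun w hw ↦ Function.invFunOn_eq (hsurj hw)⟩
end

section
/- Let U be a connected open subset of ℂ with U ≠ ℂ. If U is holomorphically simply connected, then there exists a bounded open set V ⊆ ℂ and a holomorphic bijection from U onto V with holomorphic inverse; i.e., U is biholomorphic to a bounded open subset of ℂ. -/
/-- A function with nonvanishing holomorphic derivative on an open set has open image. -/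
theorem isOpen_image_of_hasDerivAt_ne_zero {U : Set ℂ} (hU : IsOpen U) {f f' : ℂ → ℂ}
    (hf : ∀ z ∈ U, HasDerivAt f (f' z) z) (hf' : ∀ z ∈ U, f' z ≠ 0) : IsOpen (f '' U) := by
  rw [isOpen_iff_mem_nhds]
  rintro _ ⟨z, hz, rfl⟩
  have hd : DifferentiableOn ℂ f U := fun w hw =>
    (hf w hw).differentiableAt.differentiableWithinAt
  have hs := (hd.analyticAt (hU.mem_nhds hz)).hasStrictDerivAt
  rw [(hf z hz).deriv] at hs
  rw [← hs.map_nhds_eq (hf' z hz)]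
  exact Filter.image_mem_map (hU.mem_nhds hz)

/-- On a holomorphically simply connected domain `U` omitting `a`, there is a branch of
`log (z - a)`, up to an additive constant. -/
theorem HolSC.exists_log_sub {U : Set ℂ} (hUopen : IsOpen U) (hUconn : IsConnected U)
    (hU : HolSC U) {a : ℂ} (ha : a ∉ U) :
    ∃ g : ℂ → ℂ, ∃ c : ℂ, (∀ z ∈ U, HasDerivAt g (z - a)⁻¹ z) ∧
      ∀ z ∈ U, z = a + c * Complex.exp (g z) := by
  have hne : ∀ z ∈ U, z - a ≠ 0 := fun z hz h => ha (sub_eq_zero.mp h ▸ hz)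
  obtain ⟨g, -, hg⟩ := hU (fun z => (z - a)⁻¹) fun z hz =>
    ((differentiableAt_id.sub_const a).inv (hne z hz)).differentiableWithinAt
  have hder : ∀ z ∈ U, HasDerivAt (fun z => (z - a) * Complex.exp (-g z)) 0 z := by
    intro z hz
    have h := ((hasDerivAt_id z).sub_const a).mul (hg z hz).neg.cexp
    refine h.congr_deriv ?_
    simp [hne z hz, mul_comm]
  obtain ⟨z₀, hz₀⟩ := hUconn.nonempty
  refine ⟨g, (z₀ - a) * Complex.exp (-g z₀), hg, fun z hz => ?_⟩
  have h := hUopen.is_const_of_deriv_eq_zero hUconn.isPreconnected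
    (fun w hw => (hder w hw).differentiableAt.differentiableWithinAt)
    (fun w hw => (hder w hw).deriv) hz hz₀
  rw [← h, mul_assoc, ← Complex.exp_add]
  simp

/-- A connected open proper subset of `ℂ` that is holomorphically simply connected
is biholomorphic to a bounded open subset of `ℂ`. -/
theorem holSC_biholomorphic_to_bounded (U : Set ℂ) (hUopen : IsOpen U)
    (hUconn : IsConnected U) (hUne : U ≠ Set.univ) (hU : HolSC U) :
    ∃ V : Set ℂ, IsOpen V ∧ Bornology.IsBounded V ∧
      ∃ φ ψ : ℂ → ℂ,
        DifferentiableOn ℂ φ U ∧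
        DifferentiableOn ℂ ψ V ∧
        Set.MapsTo φ U V ∧
        Set.MapsTo ψ V U ∧
        (∀ z ∈ U, ψ (φ z) = z) ∧
        (∀ w ∈ V, φ (ψ w) = w) := by
  obtain ⟨a, ha⟩ := (Set.ne_univ_iff_exists_notMem U).mp hUne
  obtain ⟨g, c, hg, hexp⟩ := hU.exists_log_sub hUopen hUconn ha
  have hne : ∀ z ∈ U, z - a ≠ 0 := fun z hz h => ha (sub_eq_zero.mp h ▸ hz)
  obtain ⟨z₀, hz₀⟩ := hUconn.nonempty
  obtain ⟨r, hr, hball⟩ := Metric.isOpen_iff.mp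
    (isOpen_image_of_hasDerivAt_ne_zero hUopen hg fun z hz => inv_ne_zero (hne z hz))
    (g z₀) ⟨z₀, hz₀, rfl⟩
  set b : ℂ := g z₀ + 2 * Real.pi * Complex.I with hb
  -- The image of `g` is disjoint from its translate by `2πi`, so it omits a ball around `b`.
  have hfar : ∀ z ∈ U, r ≤ ‖g z - b‖ := by
    intro z hz
    by_contra! hlt
    obtain ⟨w, hw, hgw⟩ : g z - 2 * Real.pi * Complex.I ∈ g '' U := hball (by
      rw [Metric.mem_ball, dist_eq_norm]
      rwa [hb, ← sub_sub, sub_right_comm] at hlt)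
    have hwz : w = z := by
      rw [hexp w hw, hgw, Complex.exp_sub, Complex.exp_two_pi_mul_I, div_one, ← hexp z hz]
    rw [hwz] at hgw
    exact Complex.two_pi_I_ne_zero (sub_eq_self.mp hgw.symm)
  have hgb : ∀ z ∈ U, g z - b ≠ 0 := fun z hz => norm_pos_iff.mp (hr.trans_le (hfar z hz))
  set φ : ℂ → ℂ := fun z => (g z - b)⁻¹ with hφ
  set ψ : ℂ → ℂ := fun w => a + c * Complex.exp (w⁻¹ + b) with hψ
  have hφd : ∀ z ∈ U, HasDerivAt φ (-(z - a)⁻¹ / (g z - b) ^ 2) z := fun z hz =>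
    ((hg z hz).sub_const b).fun_inv (hgb z hz)
  have hleft : ∀ z ∈ U, ψ (φ z) = z := by
    intro z hz
    simp only [hφ, hψ, inv_inv, sub_add_cancel]
    exact (hexp z hz).symm
  refine ⟨φ '' U, ?_, ?_, φ, ψ, ?_, ?_, Set.mapsTo_image φ U, ?_, hleft, ?_⟩
  · exact isOpen_image_of_hasDerivAt_ne_zero hUopen hφd fun z hz =>
      div_ne_zero (neg_ne_zero.mpr (inv_ne_zero (hne z hz))) (pow_ne_zero 2 (hgb z hz))
  · refine isBounded_iff_forall_norm_le.mpr ⟨r⁻¹, ?_⟩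
    rintro _ ⟨z, hz, rfl⟩
    rw [hφ, norm_inv]
    exact inv_anti₀ hr (hfar z hz)
  · exact fun z hz => (hφd z hz).differentiableAt.differentiableWithinAt
  · rintro _ ⟨z, hz, rfl⟩
    have h0 : φ z ≠ 0 := inv_ne_zero (hgb z hz)
    exact ((((differentiableAt_inv h0).add_const b).cexp.const_mul c).const_add
      a).differentiableWithinAt
  · rintro _ ⟨z, hz, rfl⟩
    rwa [hleft z hz]
  · rintro _ ⟨z, hz, rfl⟩
    rw [hleft z hz]
end

section
/- Let U be a connected open subset of ℂ that is holomorphically simply connected, and let f be a holomorphic function on U with f(z) ≠ 0 for all z ∈ U. Then there exists a holomorphic function L on U such that exp(L(z)) = f(z) for all z ∈ U. -/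
/-- On a holomorphically simply connected connected open set, every nonvanishing
holomorphic function has a holomorphic logarithm. -/
theorem holSC_exists_log (U : Set ℂ) (hUopen : IsOpen U) (hUconn : IsConnected U)
    (hU : HolSC U) (f : ℂ → ℂ) (hf : DifferentiableOn ℂ f U)
    (hfne : ∀ z ∈ U, f z ≠ 0) :
    ∃ L : ℂ → ℂ, DifferentiableOn ℂ L U ∧ ∀ z ∈ U, Complex.exp (L z) = f z := by
  have hf' : ∀ z ∈ U, HasDerivAt f (deriv f z) z := fun z hz =>
    (hf.differentiableAt (hUopen.mem_nhds hz)).hasDerivAt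
  obtain ⟨F, hF, hF'⟩ := hU (fun z => deriv f z / f z) ((hf.deriv hUopen).div hf hfne)
  have hderiv : ∀ z ∈ U, HasDerivAt (fun w => f w * Complex.exp (-F w)) 0 z := by
    intro z hz
    have hne := hfne z hz
    refine ((hf' z hz).mul (hF' z hz).neg.cexp).congr_deriv ?_
    field_simp
    ring
  obtain ⟨c, hc⟩ := hUopen.exists_is_const_of_deriv_eq_zero hUconn.isPreconnected
    (fun z hz => (hderiv z hz).differentiableAt.differentiableWithinAt)
    (fun z hz => (hderiv z hz).deriv)
  obtain ⟨z₀, hz₀⟩ := hUconn.nonempty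
  have hc0 : c ≠ 0 := by
    rw [← hc z₀ hz₀]
    exact mul_ne_zero (hfne z₀ hz₀) (Complex.exp_ne_zero _)
  refine ⟨fun z => F z + Complex.log c, hF.add_const _, fun z hz => ?_⟩
  rw [Complex.exp_add, Complex.exp_log hc0, ← hc z hz, mul_left_comm, ← Complex.exp_add,
    add_neg_cancel, Complex.exp_zero, mul_one]
end

section
/- Let U be a connected open subset of ℂ that is simply connected as a topological space. Then U is holomorphically simply connected: for every holomorphic function f on U there exists a holomorphic function F on U with F'(z) = f(z) for all z ∈ U. -/
open Set Filter Topology Metric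

section Cocycle

variable {X ι A : Type*} [TopologicalSpace X] [AddCommGroup A]

/-- The principal bundle over `X` with discrete fibre `A` glued from trivial pieces over the open
cover `V` along a locally constant cocycle `g`. -/
@[reducible]
def cocycleBundleCore [TopologicalSpace A] [DiscreteTopology A]
    (V : ι → Set X) (hV : ∀ i, IsOpen (V i))
    (index : X → ι) (hindex : ∀ x, x ∈ V (index x)) (g : ι → ι → X → A)
    (hself : ∀ i, ∀ x ∈ V i, g i i x = 0)
    (hcomp : ∀ i j k, ∀ x ∈ V i ∩ V j ∩ V k, g i j x + g j k x = g i k x)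
    (hconst : ∀ i j, ∀ x ∈ V i ∩ V j, ∀ᶠ y in 𝓝 x, g i j y = g i j x) :
    FiberBundleCore ι X A where
  baseSet := V
  isOpen_baseSet := hV
  indexAt := index
  mem_baseSet_at := hindex
  coordChange i j x v := v + g i j x
  coordChange_self i x hx v := by rw [hself i x hx, add_zero]
  continuousOn_coordChange i j := by
    rintro ⟨x, v⟩ ⟨hx, -⟩
    refine ContinuousAt.continuousWithinAt ?_
    have hg : ContinuousAt (g i j) x :=
      continuousAt_const.congr ((hconst i j x hx).mono fun _ h ↦ h.symm)
    exact continuousAt_snd.add (hg.comp (f := Prod.fst) continuousAt_fst)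
  coordChange_comp i j k x hx v := by rw [add_assoc, hcomp i j k x hx]

/-- On a simply connected, locally path connected space, every locally constant Čech 1-cocycle
is a coboundary. -/
theorem exists_locallyConstant_coboundary [SimplyConnectedSpace X] [LocallyPathConnectedSpace X]
    (V : ι → Set X) (hV : ∀ i, IsOpen (V i)) (hcover : ∀ x, ∃ i, x ∈ V i) (g : ι → ι → X → A)
    (hself : ∀ i, ∀ x ∈ V i, g i i x = 0)
    (hcomp : ∀ i j k, ∀ x ∈ V i ∩ V j ∩ V k, g i j x + g j k x = g i k x)
    (hconst : ∀ i j, ∀ x ∈ V i ∩ V j, ∀ᶠ y in 𝓝 x, g i j y = g i j x) :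
    ∃ c : ι → X → A, (∀ i, ∀ x ∈ V i, ∀ᶠ y in 𝓝 x, c i y = c i x) ∧
      ∀ i j, ∀ x ∈ V i ∩ V j, c j x = c i x + g i j x := by
  let _ : TopologicalSpace A := ⊥
  have : DiscreteTopology A := ⟨rfl⟩
  choose index hindex using hcover
  let Z := cocycleBundleCore V hV index hindex g hself hcomp hconst
  have cov : IsCoveringMap (Bundle.TotalSpace.proj : Z.TotalSpace → X) :=
    FiberBundle.isCoveringMap (F := A) (E := Z.Fiber)
  obtain ⟨x₀⟩ : Nonempty X := inferInstance
  obtain ⟨s, ⟨-, hs⟩, -⟩ := cov.existsUnique_continuousMap_lifts (.id X) x₀ ⟨x₀, (0 : A)⟩ rfl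
  have hproj (x : X) : (s x).proj = x := congrFun hs x
  refine ⟨fun i x ↦ (Z.localTriv i (s x)).2, fun i x hx ↦ ?_, fun i j x hx ↦ ?_⟩
  · have hcont : ContinuousAt (fun y ↦ (Z.localTriv i (s y)).2) x := by
      refine continuousAt_snd.comp (ContinuousAt.comp ?_ s.continuous.continuousAt)
      refine (Z.localTriv i).continuousAt ((Z.localTriv i).mem_source.2 ?_)
      change (s x).proj ∈ V i
      rwa [hproj]
    exact hcont.eventually_mem (mem_nhds_discrete.2 (mem_singleton _))
  · simp only [FiberBundleCore.localTriv_apply, hproj]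
    let v : A := (s x).snd
    change v + g (index x) j x = v + g (index x) i x + g i j x
    rw [add_assoc, hcomp _ _ _ _ ⟨⟨hindex x, hx.1⟩, hx.2⟩]

end Cocycle

/-- Two primitives of the same function near a point differ by a locally constant
function. -/
theorem eventually_sub_eq_of_hasDerivAt {f F G : ℂ → ℂ} {s : Set ℂ} {x : ℂ} (hs : s ∈ 𝓝 x)
    (hF : ∀ z ∈ s, HasDerivAt F (f z) z) (hG : ∀ z ∈ s, HasDerivAt G (f z) z) :
    ∀ᶠ y in 𝓝 x, F y - G y = F x - G x := by
  obtain ⟨r, hr, hrs⟩ := Metric.mem_nhds_iff.1 hs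
  have hderiv : ∀ z ∈ ball x r, HasDerivAt (F - G) 0 z := fun z hz ↦ by
    simpa using (hF z (hrs hz)).sub (hG z (hrs hz))
  filter_upwards [ball_mem_nhds x hr] with y hy
  exact isOpen_ball.is_const_of_deriv_eq_zero (convex_ball x r).isPreconnected
    (fun z hz ↦ (hderiv z hz).differentiableAt.differentiableWithinAt)
    (fun z hz ↦ (hderiv z hz).deriv) hy (mem_ball_self hr)

/-- A topologically simply connected connected open subset of `ℂ` is
holomorphically simply connected. -/
theorem simplyConnected_implies_holSC (U : Set ℂ) (hUopen : IsOpen U)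
    (hUconn : IsConnected U) (hU : SimplyConnectedSpace U) : HolSC U := by
  intro f hf
  have := hUopen.locallyPathConnectedSpace
  have hball (i : U) : ∃ r > 0, ball (i : ℂ) r ⊆ U := Metric.isOpen_iff.1 hUopen i i.2
  choose r hr hrU using hball
  have hprim (i : U) : ∃ P : ℂ → ℂ, ∀ z ∈ ball (i : ℂ) (r i), HasDerivAt P (f z) z :=
    (hf.mono (hrU i)).isExactOn_ball
  choose P hP using hprim
  let V (i : U) : Set U := Subtype.val ⁻¹' ball (i : ℂ) (r i)
  have hmem (i : U) : i ∈ V i := mem_ball_self (hr i)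
  obtain ⟨c, hc, hcP⟩ := exists_locallyConstant_coboundary V
    (fun i ↦ isOpen_ball.preimage continuous_subtype_val) (fun x ↦ ⟨x, hmem x⟩)
    (fun i j x ↦ P i x - P j x) (fun i x _ ↦ sub_self _)
    (fun i j k x _ ↦ sub_add_sub_cancel _ _ _)
    (fun i j x hx ↦ continuous_subtype_val.continuousAt.eventually
      (eventually_sub_eq_of_hasDerivAt
        ((isOpen_ball.inter isOpen_ball).mem_nhds ⟨hx.1, hx.2⟩)
        (fun z hz ↦ hP i z hz.1) (fun z hz ↦ hP j z hz.2)))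
  classical
  let F (z : ℂ) : ℂ := if hz : z ∈ U then c ⟨z, hz⟩ ⟨z, hz⟩ + P ⟨z, hz⟩ z else 0
  have hF (z : ℂ) (hz : z ∈ U) : HasDerivAt F (f z) z := by
    lift z to U using hz
    refine ((hP z z (hmem z)).const_add (c z z)).congr_of_eventuallyEq ?_
    have hconst : ∀ᶠ y in 𝓝 (z : ℂ), ∀ hy : y ∈ U, c z ⟨y, hy⟩ = c z z := by
      have := hc z z (hmem z)
      rw [nhds_subtype_eq_comap, eventually_comap] at this
      exact this.mono fun y hy hyU ↦ hy ⟨y, hyU⟩ rfl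
    filter_upwards [hconst, ball_mem_nhds (z : ℂ) (hr z)] with y hy hyz
    have hyU : y ∈ U := hrU z hyz
    have hglue := hcP z ⟨y, hyU⟩ ⟨y, hyU⟩ ⟨hyz, hmem _⟩
    simp only [F, dif_pos hyU, hglue, hy hyU]
    ring
  exact ⟨F, fun z hz ↦ (hF z hz).differentiableAt.differentiableWithinAt, hF⟩
end

section
/- Let U be a bounded connected open subset of ℂ that is holomorphically simply connected, and let b : ∂U → ℝ be continuous. Then there exists a harmonic function h : U → ℝ such that the function on the closure of U which equals h on U and equals b on ∂U is continuous; i.e., the Dirichlet problem on U with boundary values b is solvable. -/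
open scoped Classical

/-- A real-valued function is *harmonic* on a set if near each point of the set
it is the real part of a holomorphic function. -/
def HarmonicOnSet (g : ℂ → ℝ) (U : Set ℂ) : Prop :=
  ∀ z ∈ U, ∃ V : Set ℂ, IsOpen V ∧ z ∈ V ∧ V ⊆ U ∧
    ∃ F : ℂ → ℂ, DifferentiableOn ℂ F V ∧ ∀ w ∈ V, (F w).re = g w

open Metric Filter Topology Real

/-- A continuous function on a planar set satisfying the sub-mean value inequality on all
sufficiently small circles around each point of the set. -/
structure SubharmonicOnSet (v : ℂ → ℝ) (U : Set ℂ) : Prop where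
  continuousOn : ContinuousOn v U
  le_circleAverage : ∀ z ∈ U, ∀ᶠ r in 𝓝[>] (0 : ℝ), v z ≤ circleAverage v z r

lemma IsOpen.eventually_closedBall_subset {U : Set ℂ} (hU : IsOpen U) {z : ℂ} (hz : z ∈ U) :
    ∀ᶠ r in 𝓝[>] (0 : ℝ), 0 < r ∧ closedBall z r ⊆ U := by
  obtain ⟨ε, hε, h⟩ := Metric.nhds_basis_closedBall.mem_iff.1 (hU.mem_nhds hz)
  filter_upwards [Ioc_mem_nhdsGT hε] with r hr
  exact ⟨hr.1, (closedBall_subset_closedBall hr.2).trans h⟩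

lemma ContinuousOn.circleIntegrable_of_closedBall_subset {v : ℂ → ℝ} {U : Set ℂ}
    (hv : ContinuousOn v U) {z : ℂ} {r : ℝ} (hr : 0 < r) (h : closedBall z r ⊆ U) :
    CircleIntegrable v z r :=
  (hv.mono (sphere_subset_closedBall.trans h)).circleIntegrable hr.le

namespace HarmonicOnSet

variable {g : ℂ → ℝ} {U : Set ℂ}

lemma of_re {F : ℂ → ℂ} (hU : IsOpen U) (hF : DifferentiableOn ℂ F U)
    (h : ∀ w ∈ U, (F w).re = g w) : HarmonicOnSet g U :=
  fun _ hz ↦ ⟨U, hU, hz, subset_rfl, F, hF, h⟩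

lemma continuousOn (hg : HarmonicOnSet g U) : ContinuousOn g U := by
  intro z hz
  obtain ⟨V, hV, hzV, -, F, hF, h⟩ := hg z hz
  have hc : ContinuousAt (fun w ↦ (F w).re) z :=
    Complex.continuous_re.continuousAt.comp (hF.continuousOn.continuousAt (hV.mem_nhds hzV))
  exact (hc.congr (eventually_of_mem (hV.mem_nhds hzV) h)).continuousWithinAt

lemma circleAverage_eq (hg : HarmonicOnSet g U) {z : ℂ} (hz : z ∈ U) :
    ∀ᶠ r in 𝓝[>] (0 : ℝ), circleAverage g z r = g z := by
  obtain ⟨V, hV, hzV, -, F, hF, h⟩ := hg z hz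
  filter_upwards [hV.eventually_closedBall_subset hzV] with r ⟨hr, hrV⟩
  have hsub : sphere z r ⊆ V := sphere_subset_closedBall.trans hrV
  have hFr : DiffContOnCl ℂ F (ball z |r|) := by
    rw [abs_of_pos hr]
    exact (hF.mono (closure_ball_subset_closedBall.trans hrV)).diffContOnCl
  have hi : CircleIntegrable F z r := (hF.continuousOn.mono hsub).circleIntegrable hr.le
  have h1 : circleAverage (Complex.reCLM ∘ F) z r = (circleAverage F z r).re :=
    Complex.reCLM.circleAverage_comp_comm hi
  rw [hFr.circleAverage, h z hzV] at h1
  rw [← h1]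
  refine circleAverage_congr_sphere fun w hw ↦ ?_
  rw [abs_of_pos hr] at hw
  exact (h w (hsub hw)).symm

lemma subharmonicOnSet (hg : HarmonicOnSet g U) : SubharmonicOnSet g U :=
  ⟨hg.continuousOn, fun _ hz ↦ (hg.circleAverage_eq hz).mono fun _ h ↦ h.ge⟩

lemma neg (hg : HarmonicOnSet g U) : HarmonicOnSet (fun z ↦ -g z) U := by
  intro z hz
  obtain ⟨V, hV, hzV, hVU, F, hF, h⟩ := hg z hz
  exact ⟨V, hV, hzV, hVU, fun w ↦ -F w, hF.neg, fun w hw ↦ by simp [h w hw]⟩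

end HarmonicOnSet

namespace SubharmonicOnSet

variable {v w : ℂ → ℝ} {U V : Set ℂ}

lemma mono (hv : SubharmonicOnSet v U) (h : V ⊆ U) : SubharmonicOnSet v V :=
  ⟨hv.continuousOn.mono h, fun z hz ↦ hv.le_circleAverage z (h hz)⟩

lemma add (hU : IsOpen U) (hv : SubharmonicOnSet v U) (hw : SubharmonicOnSet w U) :
    SubharmonicOnSet (fun z ↦ v z + w z) U := by
  refine ⟨hv.continuousOn.add hw.continuousOn, fun z hz ↦ ?_⟩
  filter_upwards [hv.le_circleAverage z hz, hw.le_circleAverage z hz,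
    hU.eventually_closedBall_subset hz] with r h1 h2 ⟨hr, hrU⟩
  rw [circleAverage_fun_add (hv.continuousOn.circleIntegrable_of_closedBall_subset hr hrU)
    (hw.continuousOn.circleIntegrable_of_closedBall_subset hr hrU)]
  exact add_le_add h1 h2

lemma const (a : ℝ) (U : Set ℂ) : SubharmonicOnSet (fun _ ↦ a) U :=
  ⟨continuousOn_const, fun z _ ↦ .of_forall fun r ↦ (circleAverage_const a z r).ge⟩

lemma const_mul {a : ℝ} (ha : 0 ≤ a) (hv : SubharmonicOnSet v U) :
    SubharmonicOnSet (fun z ↦ a * v z) U := by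
  refine ⟨continuousOn_const.mul hv.continuousOn, fun z hz ↦ ?_⟩
  filter_upwards [hv.le_circleAverage z hz] with r h
  have : circleAverage (fun z ↦ a * v z) z r = a * circleAverage v z r :=
    circleAverage_fun_smul (a := a)
  rw [this]
  gcongr

lemma max (hU : IsOpen U) (hv : SubharmonicOnSet v U) (hw : SubharmonicOnSet w U) :
    SubharmonicOnSet (fun z ↦ max (v z) (w z)) U := by
  have hc : ContinuousOn (fun z ↦ Max.max (v z) (w z)) U := hv.continuousOn.sup hw.continuousOn
  refine ⟨hc, fun z hz ↦ ?_⟩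
  filter_upwards [hv.le_circleAverage z hz, hw.le_circleAverage z hz,
    hU.eventually_closedBall_subset hz] with r h1 h2 ⟨hr, hrU⟩
  have hi := hc.circleIntegrable_of_closedBall_subset hr hrU
  exact max_le
    (h1.trans (circleAverage_mono (hv.continuousOn.circleIntegrable_of_closedBall_subset hr hrU) hi
      fun x _ ↦ le_max_left _ _))
    (h2.trans (circleAverage_mono (hw.continuousOn.circleIntegrable_of_closedBall_subset hr hrU) hi
      fun x _ ↦ le_max_right _ _))

end SubharmonicOnSet

lemma circleAverage_normSq (c : ℂ) (r : ℝ) :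
    circleAverage Complex.normSq c r = Complex.normSq c + r ^ 2 := by
  have hF : Differentiable ℂ fun z : ℂ ↦
      2 * (starRingEnd ℂ c) * z + ((r ^ 2 - Complex.normSq c : ℝ) : ℂ) := by
    fun_prop
  have h1 := (Complex.reCLM.circleAverage_comp_comm (c := c) (R := r)
    (hF.continuous.continuousOn.circleIntegrable'))
  rw [hF.diffContOnCl.circleAverage] at h1
  have h2 : circleAverage Complex.normSq c r = circleAverage (Complex.reCLM ∘
      fun z : ℂ ↦ 2 * (starRingEnd ℂ c) * z + ((r ^ 2 - Complex.normSq c : ℝ) : ℂ)) c r := by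
    refine circleAverage_congr_sphere fun z hz ↦ ?_
    have h3 : Complex.normSq (z - c) = r ^ 2 := by
      rw [Complex.normSq_eq_norm_sq, ← dist_eq_norm, mem_sphere.1 hz, sq_abs]
    simp [Complex.normSq_apply, -Complex.ofReal_sub, -Complex.ofReal_pow] at h3 ⊢
    linear_combination h3
  rw [h2, h1]
  simp [Complex.normSq_apply, -Complex.ofReal_sub, -Complex.ofReal_pow]
  ring

/-- Maximum principle: a subharmonic function on a bounded open set whose upper boundary limits are
nonpositive is nonpositive. -/
theorem SubharmonicOnSet.nonpos_of_frontier {v : ℂ → ℝ} {U : Set ℂ} (hv : SubharmonicOnSet v U)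
    (hU : IsOpen U) (hUb : Bornology.IsBounded U)
    (hbd : ∀ ξ ∈ frontier U, ∀ ε > 0, ∀ᶠ z in 𝓝[U] ξ, v z < ε) {z : ℂ} (hz : z ∈ U) :
    v z ≤ 0 := by
  by_contra! hpos
  obtain ⟨M, hM0, hM⟩ : ∃ M : ℝ, 0 < M ∧ ∀ x ∈ U, Complex.normSq x ≤ M := by
    obtain ⟨C, hC0, hC⟩ := hUb.exists_pos_norm_le
    refine ⟨C ^ 2, by positivity, fun x hx ↦ ?_⟩
    rw [Complex.normSq_eq_norm_sq]
    gcongr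
    exact hC x hx
  set δ := v z / (2 * M) with hδ
  have hδ0 : 0 < δ := by positivity
  have hδM : δ * M = v z / 2 := by rw [hδ]; field_simp
  set w : ℂ → ℝ := fun x ↦ v x + δ * Complex.normSq x with hw
  have hwc : ContinuousOn w U :=
    hv.continuousOn.add (continuousOn_const.mul Complex.continuous_normSq.continuousOn)
  set K : Set ℂ := {x | x ∈ U ∧ w z ≤ w x} with hK
  have hKU : K ⊆ U := fun x hx ↦ hx.1
  have hKclosed : IsClosed K := by
    refine isClosed_of_closure_subset fun x hx ↦ ?_
    by_cases hxU : x ∈ U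
    · have hne := mem_closure_iff_nhdsWithin_neBot.1 hx
      refine ⟨hxU, ge_of_tendsto ((hwc x hxU).mono_left (nhdsWithin_mono x hKU)) ?_⟩
      exact eventually_nhdsWithin_of_forall fun y hy ↦ hy.2
    · have hxf : x ∈ frontier U := by
        rw [hU.frontier_eq]; exact ⟨closure_mono hKU hx, hxU⟩
      have hne := mem_closure_iff_nhdsWithin_neBot.1 hx
      have h1 := (hbd x hxf (v z / 2) (by positivity)).filter_mono (nhdsWithin_mono x hKU)
      obtain ⟨y, hy1, hy2⟩ := (h1.and self_mem_nhdsWithin).exists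
      have h3 : w z ≤ w y := hy2.2
      have h4 : δ * Complex.normSq y ≤ δ * M := by gcongr; exact hM y hy2.1
      have h5 : 0 ≤ δ * Complex.normSq z := mul_nonneg hδ0.le (Complex.normSq_nonneg z)
      simp only [hw] at h3
      linarith
  have hKc : IsCompact K := Metric.isCompact_of_isClosed_isBounded hKclosed (hUb.subset hKU)
  obtain ⟨x, hxK, hxmax⟩ := hKc.exists_isMaxOn ⟨z, hz, le_rfl⟩ (hwc.mono hKU)
  have hmax : ∀ y ∈ U, w y ≤ w x := fun y hy ↦ by
    by_cases hyK : y ∈ K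
    · exact hxmax hyK
    · have : w y < w z := by
        by_contra! h
        exact hyK ⟨hy, h⟩
      exact this.le.trans hxK.2
  obtain ⟨r, hr1, hr, hrU⟩ :=
    ((hv.le_circleAverage x hxK.1).and (hU.eventually_closedBall_subset hxK.1)).exists
  have hi := hv.continuousOn.circleIntegrable_of_closedBall_subset hr hrU
  have hi2 : CircleIntegrable (fun x ↦ δ * Complex.normSq x) x r :=
    (continuous_const.mul Complex.continuous_normSq).continuousOn.circleIntegrable hr.le
  have h1 : circleAverage w x r ≤ w x :=
    circleAverage_mono_on_of_le_circle (hwc.circleIntegrable_of_closedBall_subset hr hrU)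
      fun y hy ↦ hmax y (hrU (sphere_subset_closedBall (by rwa [abs_of_pos hr] at hy)))
  have h2 : circleAverage (fun x ↦ δ * Complex.normSq x) x r = δ * (Complex.normSq x + r ^ 2) := by
    rw [← circleAverage_normSq]
    exact circleAverage_fun_smul (a := δ)
  rw [hw, circleAverage_fun_add hi hi2, h2] at h1
  have : 0 < δ * r ^ 2 := by positivity
  linarith

/-- The Poisson integral over the circle of center `c` and radius `R`. -/
noncomputable def poissonIntegral (c : ℂ) (R : ℝ) (f : ℂ → ℝ) (w : ℂ) : ℝ :=
  circleAverage (fun z ↦ poissonKernel c w z * f z) c R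

section PoissonIntegral

variable {c w : ℂ} {R : ℝ} {f g : ℂ → ℝ}

lemma continuousOn_poissonKernel_sphere (hw : w ∈ ball c R) :
    ContinuousOn (poissonKernel c w) (sphere c R) := by
  have hR : |R| = R := abs_of_pos (pos_of_mem_ball hw)
  rw [poissonKernel_eq_re_herglotzRieszKernel]
  have h := continuousOn_herglotzRieszKernel_sphere hw
  rw [hR] at h
  exact Complex.continuous_re.comp_continuousOn h

lemma circleIntegrable_poissonKernel_mul (hw : w ∈ ball c R) (hf : ContinuousOn f (sphere c R)) :
    CircleIntegrable (fun z ↦ poissonKernel c w z * f z) c R :=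
  ((continuousOn_poissonKernel_sphere hw).mul hf).circleIntegrable (pos_of_mem_ball hw).le

lemma poissonKernel_eq_on_sphere {z : ℂ} (hz : z ∈ sphere c R) :
    poissonKernel c w z = (R ^ 2 - ‖w - c‖ ^ 2) / ‖z - w‖ ^ 2 := by
  rw [poissonKernel_def, mem_sphere_iff_norm.1 hz, sub_sub_sub_cancel_right]

lemma poissonKernel_nonneg_on_sphere (hw : w ∈ ball c R) {z : ℂ} (hz : z ∈ sphere c R) :
    0 ≤ poissonKernel c w z := by
  rw [poissonKernel_eq_on_sphere hz]
  have h := mem_ball_iff_norm.1 hw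
  have : ‖w - c‖ ^ 2 ≤ R ^ 2 := by gcongr
  exact div_nonneg (by linarith) (by positivity)

lemma poissonIntegral_mono (hw : w ∈ ball c R) (hf : ContinuousOn f (sphere c R))
    (hg : ContinuousOn g (sphere c R)) (h : ∀ z ∈ sphere c R, f z ≤ g z) :
    poissonIntegral c R f w ≤ poissonIntegral c R g w := by
  refine circleAverage_mono (circleIntegrable_poissonKernel_mul hw hf)
    (circleIntegrable_poissonKernel_mul hw hg) fun z hz ↦ ?_
  rw [abs_of_pos (pos_of_mem_ball hw)] at hz
  exact mul_le_mul_of_nonneg_left (h z hz) (poissonKernel_nonneg_on_sphere hw hz)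

lemma poissonIntegral_sub (hw : w ∈ ball c R) (hf : ContinuousOn f (sphere c R))
    (hg : ContinuousOn g (sphere c R)) :
    poissonIntegral c R (fun z ↦ f z - g z) w =
      poissonIntegral c R f w - poissonIntegral c R g w := by
  simp only [poissonIntegral, mul_sub]
  exact circleAverage_fun_sub (circleIntegrable_poissonKernel_mul hw hf)
    (circleIntegrable_poissonKernel_mul hw hg)

lemma poissonIntegral_eq_of_re {F : ℂ → ℂ} (hw : w ∈ ball c R)
    (hF : DiffContOnCl ℂ F (ball c R)) :
    poissonIntegral c R (fun z ↦ (F z).re) w = (F w).re := by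
  have hR := pos_of_mem_ball hw
  have hFc : ContinuousOn F (sphere c R) := by
    refine hF.continuousOn.mono ?_
    rw [closure_ball c hR.ne']
    exact sphere_subset_closedBall
  have hi : CircleIntegrable (poissonKernel c w • F) c R :=
    ((continuousOn_poissonKernel_sphere hw).smul hFc).circleIntegrable hR.le
  have h := Complex.reCLM.circleAverage_comp_comm hi
  rw [hF.circleAverage_poissonKernel_smul hw] at h
  rw [poissonIntegral, ← Complex.reCLM_apply (F w), ← h]
  congr 1
  ext z
  simp

lemma poissonIntegral_const (hw : w ∈ ball c R) (a : ℝ) :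
    poissonIntegral c R (fun _ ↦ a) w = a := by
  simpa using poissonIntegral_eq_of_re hw (diffContOnCl_const (c := (a : ℂ)))

lemma abs_poissonIntegral_sub_le (hw : w ∈ ball c R) (hf : ContinuousOn f (sphere c R))
    (hg : ContinuousOn g (sphere c R)) {ε : ℝ} (h : ∀ z ∈ sphere c R, |f z - g z| ≤ ε) :
    |poissonIntegral c R f w - poissonIntegral c R g w| ≤ ε := by
  rw [← poissonIntegral_sub hw hf hg, abs_le]
  constructor
  · rw [← poissonIntegral_const hw (-ε)]
    exact poissonIntegral_mono hw continuousOn_const (hf.sub hg) fun z hz ↦ (abs_le.1 (h z hz)).1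
  · rw [← poissonIntegral_const hw ε]
    exact poissonIntegral_mono hw (hf.sub hg) continuousOn_const fun z hz ↦ (abs_le.1 (h z hz)).2

lemma poissonIntegral_center (hR : 0 < R) :
    poissonIntegral c R f c = circleAverage f c R := by
  refine circleAverage_congr_sphere fun z hz ↦ ?_
  rw [abs_of_pos hR] at hz
  simp only [poissonKernel_eq_on_sphere hz, mem_sphere_iff_norm.1 hz]
  field_simp
  simp

/-- **Harnack inequality** on the concentric disc of half the radius. -/
lemma poissonIntegral_le_three_mul (hR : 0 < R) (hw : w ∈ closedBall c (R / 2))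
    (hf : ContinuousOn f (sphere c R)) (h : ∀ z ∈ sphere c R, 0 ≤ f z) :
    poissonIntegral c R f w ≤ 3 * poissonIntegral c R f c := by
  have hwR : w ∈ ball c R := closedBall_subset_ball (by linarith) hw
  have hc : 3 * circleAverage f c R = circleAverage (fun z ↦ 3 * f z) c R :=
    (circleAverage_fun_smul (a := (3 : ℝ))).symm
  rw [poissonIntegral_center hR, hc]
  refine circleAverage_mono (circleIntegrable_poissonKernel_mul hwR hf)
    ((continuousOn_const.mul hf).circleIntegrable hR.le) fun z hz ↦ ?_
  rw [abs_of_pos hR] at hz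
  refine mul_le_mul_of_nonneg_right ?_ (h z hz)
  have h1 := re_herglotzRieszKernel_le hz hwR
  have h2 : poissonKernel c w z = ((z - c + (w - c)) / ((z - c) - (w - c))).re := by
    rw [poissonKernel_eq_re_herglotzRieszKernel]; rfl
  rw [h2]
  refine h1.trans ?_
  have h3 := mem_closedBall_iff_norm.1 hw
  rw [div_le_iff₀ (by linarith)]
  linarith

lemma exists_differentiableOn_re_eq_poissonIntegral (hR : 0 < R)
    (hf : ContinuousOn f (sphere c R)) :
    ∃ F : ℂ → ℂ, DifferentiableOn ℂ F (ball c R) ∧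
      ∀ w ∈ ball c R, (F w).re = poissonIntegral c R f w := by
  set g : ℂ → ℝ := fun z ↦ f (z + c) with hg
  have hgc : ContinuousOn g (sphere 0 R) :=
    hf.comp (by fun_prop) fun z hz ↦ by simpa [mem_sphere_iff_norm] using hz
  have hgi : CircleIntegrable g 0 R := hgc.circleIntegrable hR.le
  have hgi' : CircleIntegrable (fun z ↦ (g z : ℂ)) 0 R :=
    (Complex.continuous_ofReal.comp_continuousOn hgc).circleIntegrable hR.le
  refine ⟨fun w ↦ circleAverage (fun ζ ↦ herglotzRieszKernel 0 (w - c) ζ • (g ζ : ℂ)) 0 R,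
    ?_, fun w hw ↦ ?_⟩
  · exact (differentiableOn_circleAverage_herglotzRieszKernel_smul hgi').comp
      (by fun_prop) fun z hz ↦ by simpa [dist_eq_norm] using hz
  · have hw0 : w - c ∈ ball 0 R := by simpa [dist_eq_norm] using hw
    rw [re_circleAverage_herglotzRieszKernel_smul hgi hw0, poissonIntegral,
      ← circleAverage_map_add_const (c := c)]
    congr 1
    ext z
    simp [poissonKernel_eq_re_herglotzRieszKernel, herglotzRieszKernel_add_const, hg]

lemma harmonicOnSet_poissonIntegral (hR : 0 < R) (hf : ContinuousOn f (sphere c R)) :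
    HarmonicOnSet (poissonIntegral c R f) (ball c R) := by
  obtain ⟨F, hF, h⟩ := exists_differentiableOn_re_eq_poissonIntegral hR hf
  exact .of_re isOpen_ball hF h

lemma tendsto_poissonIntegral (hf : ContinuousOn f (sphere c R)) {ξ : ℂ} (hξ : ξ ∈ sphere c R) :
    Tendsto (poissonIntegral c R f) (𝓝[ball c R] ξ) (𝓝 (f ξ)) := by
  obtain ⟨M, hM⟩ := (isCompact_sphere c R).exists_bound_of_continuousOn hf
  have hM0 : 0 ≤ M := (norm_nonneg _).trans (hM ξ hξ)
  rw [Metric.tendsto_nhds]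
  intro ε hε
  obtain ⟨δ, hδ, hδf⟩ := Metric.continuousOn_iff.1 hf ξ hξ (ε / 2) (by positivity)
  have hlim : Tendsto (fun w ↦ 2 * M * ((R ^ 2 - ‖w - c‖ ^ 2) / (δ / 2) ^ 2)) (𝓝[ball c R] ξ)
      (𝓝 0) := by
    have : ContinuousAt (fun w ↦ 2 * M * ((R ^ 2 - ‖w - c‖ ^ 2) / (δ / 2) ^ 2)) ξ := by fun_prop
    have h := this.tendsto
    rw [mem_sphere_iff_norm.1 hξ] at h
    simpa using h.mono_left nhdsWithin_le_nhds
  filter_upwards [hlim.eventually (gt_mem_nhds (half_pos hε)), self_mem_nhdsWithin,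
    mem_nhdsWithin_of_mem_nhds (ball_mem_nhds ξ (half_pos hδ))] with w h1 hw hwξ
  have hnum : 0 ≤ R ^ 2 - ‖w - c‖ ^ 2 := by
    have h := mem_ball_iff_norm.1 hw
    have : ‖w - c‖ ^ 2 ≤ R ^ 2 := by gcongr
    linarith
  set A := 2 * M * ((R ^ 2 - ‖w - c‖ ^ 2) / (δ / 2) ^ 2) with hA
  have hkey : ∀ z ∈ sphere c R, poissonKernel c w z * |f z - f ξ| ≤
      poissonKernel c w z * (ε / 2) + A := by
    intro z hz
    have hk := poissonKernel_nonneg_on_sphere hw hz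
    have hA0 : 0 ≤ A := by positivity
    by_cases hzξ : dist z ξ < δ
    · have h2 : |f z - f ξ| ≤ ε / 2 := (hδf z hz hzξ).le
      nlinarith [mul_le_mul_of_nonneg_left h2 hk]
    · have h2 : |f z - f ξ| ≤ 2 * M := by
        have ha := hM z hz
        have hb := hM ξ hξ
        rw [Real.norm_eq_abs] at ha hb
        linarith [abs_sub (f z) (f ξ)]
      have h3 : δ / 2 ≤ ‖z - w‖ := by
        have := dist_triangle z w ξ
        rw [← dist_eq_norm]
        linarith [mem_ball.1 hwξ]
      have h4 : poissonKernel c w z ≤ (R ^ 2 - ‖w - c‖ ^ 2) / (δ / 2) ^ 2 := by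
        rw [poissonKernel_eq_on_sphere hz]
        gcongr
      have h5 : poissonKernel c w z * |f z - f ξ| ≤ A := by
        rw [hA, mul_comm (2 * M)]
        gcongr
      have : 0 ≤ poissonKernel c w z * (ε / 2) := by positivity
      linarith
  have hR := pos_of_mem_ball hw
  have hc : ContinuousOn (fun z ↦ f z - f ξ) (sphere c R) := hf.sub continuousOn_const
  have h2 : |poissonIntegral c R f w - f ξ| ≤ ε / 2 + A := by
    have h3 : poissonIntegral c R f w - f ξ = poissonIntegral c R (fun z ↦ f z - f ξ) w := by
      rw [poissonIntegral_sub hw hf continuousOn_const, poissonIntegral_const hw]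
    have hi : CircleIntegrable (fun z ↦ poissonKernel c w z * (ε / 2)) c R :=
      circleIntegrable_poissonKernel_mul hw continuousOn_const
    rw [h3]
    refine abs_circleAverage_le_circleAverage_abs.trans ?_
    have h4 : circleAverage (fun z ↦ poissonKernel c w z * (ε / 2) + A) c R = ε / 2 + A := by
      rw [circleAverage_fun_add hi (circleIntegrable_const _ _ _), circleAverage_const]
      congr 1
      exact poissonIntegral_const hw _
    rw [← h4]
    refine circleAverage_mono (circleIntegrable_poissonKernel_mul hw hc).abs
      (hi.add (circleIntegrable_const _ _ _)) fun z hz ↦ ?_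
    rw [abs_of_pos hR] at hz
    rw [Pi.abs_apply, abs_mul, abs_of_nonneg (poissonKernel_nonneg_on_sphere hw hz)]
    exact hkey z hz
  rw [Real.dist_eq]
  linarith

end PoissonIntegral

/-- The Poisson modification of `v`: its Poisson integral inside the disc, `v` itself outside. -/
noncomputable def poissonModification (c : ℂ) (R : ℝ) (v : ℂ → ℝ) (z : ℂ) : ℝ :=
  if z ∈ ball c R then poissonIntegral c R v z else v z

section PoissonModification

variable {c : ℂ} {R : ℝ} {v : ℂ → ℝ} {U : Set ℂ}

lemma poissonModification_of_mem {z : ℂ} (hz : z ∈ ball c R) :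
    poissonModification c R v z = poissonIntegral c R v z := if_pos hz

lemma poissonModification_of_notMem {z : ℂ} (hz : z ∉ ball c R) :
    poissonModification c R v z = v z := if_neg hz

lemma continuousOn_poissonModification (hR : 0 < R) (hv : ContinuousOn v U)
    (hball : closedBall c R ⊆ U) : ContinuousOn (poissonModification c R v) U := by
  have hs : ContinuousOn v (sphere c R) := hv.mono (sphere_subset_closedBall.trans hball)
  have hfr : ∀ a ∈ U ∩ frontier {z | z ∈ ball c R}, a ∈ sphere c R := by
    rintro a ⟨-, ha⟩
    rwa [Set.ofPred_mem_eq, frontier_ball c hR.ne'] at ha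
  have hval : ∀ a ∈ sphere c R,
      (if a ∈ ball c R then poissonIntegral c R v a else v a) = v a := by
    intro a ha
    rw [if_neg]
    rw [mem_ball, mem_sphere.1 ha]
    exact lt_irrefl _
  unfold poissonModification
  refine ContinuousOn.if' ?_ ?_ ?_ (hv.mono Set.inter_subset_left)
  · intro a ha
    rw [hval a (hfr a ha)]
    exact (tendsto_poissonIntegral hs (hfr a ha)).mono_left
      (nhdsWithin_mono a Set.inter_subset_right)
  · intro a ha
    rw [hval a (hfr a ha)]
    exact (hv a ha.1).mono_left (nhdsWithin_mono a Set.inter_subset_left)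
  · exact (harmonicOnSet_poissonIntegral hR hs).continuousOn.mono Set.inter_subset_right

lemma SubharmonicOnSet.le_poissonModification (hR : 0 < R)
    (hv : SubharmonicOnSet v U) (hball : closedBall c R ⊆ U) (z : ℂ) :
    v z ≤ poissonModification c R v z := by
  by_cases hz : z ∈ ball c R
  · have hs : ContinuousOn v (sphere c R) :=
      hv.continuousOn.mono (sphere_subset_closedBall.trans hball)
    have hharm := (harmonicOnSet_poissonIntegral hR hs).neg.subharmonicOnSet
    have hsub := (hv.mono (ball_subset_closedBall.trans hball)).add isOpen_ball hharm
    have h := hsub.nonpos_of_frontier isOpen_ball isBounded_ball (fun ξ hξ ε hε ↦ ?_) hz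
    · rw [poissonModification_of_mem hz]
      linarith
    · rw [frontier_ball c hR.ne'] at hξ
      have h1 : Tendsto v (𝓝[ball c R] ξ) (𝓝 (v ξ)) :=
        (hv.continuousOn ξ (hball (sphere_subset_closedBall hξ))).mono_left
          (nhdsWithin_mono ξ (ball_subset_closedBall.trans hball))
      have h2 := h1.add (tendsto_poissonIntegral hs hξ).neg
      rw [add_neg_cancel] at h2
      exact h2.eventually (gt_mem_nhds hε)
  · exact (poissonModification_of_notMem hz).ge

lemma SubharmonicOnSet.poissonModification (hU : IsOpen U) (hR : 0 < R)
    (hv : SubharmonicOnSet v U) (hball : closedBall c R ⊆ U) :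
    SubharmonicOnSet (poissonModification c R v) U := by
  have hc := continuousOn_poissonModification hR hv.continuousOn hball
  have hs : ContinuousOn v (sphere c R) :=
    hv.continuousOn.mono (sphere_subset_closedBall.trans hball)
  refine ⟨hc, fun z hz ↦ ?_⟩
  by_cases hzb : z ∈ ball c R
  · filter_upwards [(harmonicOnSet_poissonIntegral hR hs).circleAverage_eq hzb,
      isOpen_ball.eventually_closedBall_subset hzb] with r h1 ⟨hr, hrb⟩
    rw [poissonModification_of_mem hzb, ← h1]
    refine (circleAverage_congr_sphere fun x hx ↦ ?_).le
    rw [abs_of_pos hr] at hx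
    exact (poissonModification_of_mem (hrb (sphere_subset_closedBall hx))).symm
  · filter_upwards [hv.le_circleAverage z hz, hU.eventually_closedBall_subset hz]
      with r h1 ⟨hr, hrU⟩
    rw [poissonModification_of_notMem hzb]
    exact h1.trans (circleAverage_mono
      (hv.continuousOn.circleIntegrable_of_closedBall_subset hr hrU)
      (hc.circleIntegrable_of_closedBall_subset hr hrU)
      fun x _ ↦ hv.le_poissonModification hR hball x)

end PoissonModification

/-- The Perron family of subharmonic functions on `U` whose upper boundary limits are at
most `b`. -/
def perronFamily (U : Set ℂ) (b : ℂ → ℝ) : Set (ℂ → ℝ) :=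
  {v | SubharmonicOnSet v U ∧ ∀ ξ ∈ frontier U, ∀ ε > 0, ∀ᶠ z in 𝓝[U] ξ, v z < b ξ + ε}

/-- The upper envelope of the Perron family. -/
noncomputable def perronSolution (U : Set ℂ) (b : ℂ → ℝ) (z : ℂ) : ℝ :=
  ⨆ v : perronFamily U b, v.1 z

section Perron

variable {U : Set ℂ} {b v w : ℂ → ℝ} {M : ℝ}

lemma le_of_mem_perronFamily (hU : IsOpen U) (hUb : Bornology.IsBounded U)
    (hM : ∀ ξ ∈ frontier U, |b ξ| ≤ M) (hv : v ∈ perronFamily U b) {z : ℂ} (hz : z ∈ U) :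
    v z ≤ M := by
  have h := (hv.1.add hU (.const (-M) U)).nonpos_of_frontier hU hUb (fun ξ hξ ε hε ↦ ?_) hz
  · linarith
  · filter_upwards [hv.2 ξ hξ ε hε] with x hx
    linarith [le_of_abs_le (hM ξ hξ)]

lemma neg_const_mem_perronFamily (hM : ∀ ξ ∈ frontier U, |b ξ| ≤ M) :
    (fun _ ↦ -M) ∈ perronFamily U b :=
  ⟨.const _ _, fun ξ hξ ε hε ↦ .of_forall fun _ ↦ by linarith [neg_le_of_abs_le (hM ξ hξ)]⟩

lemma max_mem_perronFamily (hU : IsOpen U) (hv : v ∈ perronFamily U b)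
    (hw : w ∈ perronFamily U b) : (fun z ↦ max (v z) (w z)) ∈ perronFamily U b := by
  refine ⟨hv.1.max hU hw.1, fun ξ hξ ε hε ↦ ?_⟩
  filter_upwards [hv.2 ξ hξ ε hε, hw.2 ξ hξ ε hε] with z h1 h2 using max_lt h1 h2

lemma poissonModification_mem_perronFamily (hU : IsOpen U) (hv : v ∈ perronFamily U b) {c : ℂ}
    {R : ℝ} (hR : 0 < R) (hball : closedBall c R ⊆ U) :
    poissonModification c R v ∈ perronFamily U b := by
  refine ⟨hv.1.poissonModification hU hR hball, fun ξ hξ ε hε ↦ ?_⟩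
  have hξU : ξ ∉ closedBall c R := fun h ↦ by
    rw [hU.frontier_eq] at hξ
    exact hξ.2 (hball h)
  filter_upwards [hv.2 ξ hξ ε hε,
    mem_nhdsWithin_of_mem_nhds (isClosed_closedBall.isOpen_compl.mem_nhds hξU)] with z h1 h2
  rwa [poissonModification_of_notMem fun h ↦ h2 (ball_subset_closedBall h)]

lemma le_perronSolution (hU : IsOpen U) (hUb : Bornology.IsBounded U)
    (hM : ∀ ξ ∈ frontier U, |b ξ| ≤ M) (hv : v ∈ perronFamily U b) {z : ℂ} (hz : z ∈ U) :
    v z ≤ perronSolution U b z := by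
  refine le_ciSup (f := fun v : perronFamily U b ↦ v.1 z) ⟨M, ?_⟩ ⟨v, hv⟩
  rintro _ ⟨⟨w, hw⟩, rfl⟩
  exact le_of_mem_perronFamily hU hUb hM hw hz

lemma perronSolution_le (hM : ∀ ξ ∈ frontier U, |b ξ| ≤ M) {z : ℂ} {a : ℝ}
    (h : ∀ v ∈ perronFamily U b, v z ≤ a) : perronSolution U b z ≤ a :=
  haveI : Nonempty (perronFamily U b) := ⟨⟨_, neg_const_mem_perronFamily hM⟩⟩
  ciSup_le fun v ↦ h v.1 v.2

/-- On a disc of half the radius, the Perron solution is uniformly approximated by Poisson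
integrals over the larger circle. -/
lemma exists_poissonIntegral_near_perronSolution (hU : IsOpen U) (hUb : Bornology.IsBounded U)
    (hM : ∀ ξ ∈ frontier U, |b ξ| ≤ M) {c : ℂ} {R : ℝ} (hR : 0 < R) (hball : closedBall c R ⊆ U)
    {ε : ℝ} (hε : 0 < ε) :
    ∃ v : ℂ → ℝ, ContinuousOn v (sphere c R) ∧ ∀ w ∈ closedBall c (R / 2),
      |perronSolution U b w - poissonIntegral c R v w| ≤ ε := by
  have hc : c ∈ U := hball (mem_closedBall_self hR.le)
  obtain ⟨v, hv, hvc⟩ : ∃ v ∈ perronFamily U b, perronSolution U b c - ε / 3 < v c := by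
    by_contra! h
    linarith [perronSolution_le hM h]
  have hvs : ContinuousOn v (sphere c R) :=
    hv.1.continuousOn.mono (sphere_subset_closedBall.trans hball)
  refine ⟨v, hvs, fun w hw ↦ ?_⟩
  have hcb : c ∈ ball c R := mem_ball_self hR
  have hwb : w ∈ ball c R := closedBall_subset_ball (by linarith) hw
  have hwU : w ∈ U := hball (ball_subset_closedBall hwb)
  have hlow : poissonIntegral c R v w ≤ perronSolution U b w := by
    rw [← poissonModification_of_mem hwb]
    exact le_perronSolution hU hUb hM (poissonModification_mem_perronFamily hU hv hR hball) hwU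
  have hup : perronSolution U b w ≤ poissonIntegral c R v w + ε := by
    refine perronSolution_le hM fun v₁ hv₁ ↦ ?_
    set v₂ : ℂ → ℝ := fun z ↦ max (v₁ z) (v z)
    have hv₂m : v₂ ∈ perronFamily U b := max_mem_perronFamily hU hv₁ hv
    have hv₂s : ContinuousOn v₂ (sphere c R) :=
      hv₂m.1.continuousOn.mono (sphere_subset_closedBall.trans hball)
    have h1 : v₁ w ≤ poissonIntegral c R v₂ w := by
      rw [← poissonModification_of_mem hwb]
      exact (le_max_left _ _).trans (hv₂m.1.le_poissonModification hR hball w)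
    have h2 := poissonIntegral_le_three_mul (f := fun z ↦ v₂ z - v z) hR hw (hv₂s.sub hvs)
      fun z _ ↦ sub_nonneg.2 (le_max_right (v₁ z) (v z))
    rw [poissonIntegral_sub hwb hv₂s hvs, poissonIntegral_sub hcb hv₂s hvs] at h2
    have h3 : poissonIntegral c R v₂ c ≤ perronSolution U b c := by
      rw [← poissonModification_of_mem hcb]
      exact le_perronSolution hU hUb hM (poissonModification_mem_perronFamily hU hv₂m hR hball) hc
    have h4 : v c ≤ poissonIntegral c R v c := by
      rw [← poissonModification_of_mem hcb]
      exact hv.1.le_poissonModification hR hball c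
    linarith
  rw [abs_le]
  constructor <;> linarith

theorem harmonicOnSet_perronSolution (hU : IsOpen U) (hUb : Bornology.IsBounded U)
    (hM : ∀ ξ ∈ frontier U, |b ξ| ≤ M) : HarmonicOnSet (perronSolution U b) U := by
  intro c hc
  obtain ⟨R, hR, hball⟩ := (hU.eventually_closedBall_subset hc).exists
  have hR2 : 0 < R / 2 := by positivity
  have happrox := fun {ε : ℝ} (hε : 0 < ε) ↦
    exists_poissonIntegral_near_perronSolution hU hUb hM hR hball hε
  have hsub : closedBall c (R / 2) ⊆ ball c R := closedBall_subset_ball (by linarith)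
  have hcont : ContinuousOn (perronSolution U b) (closedBall c (R / 2)) := by
    refine continuousOn_of_uniform_approx_of_continuousOn fun s hs ↦ ?_
    obtain ⟨ε, hε, hεs⟩ := Metric.mem_uniformity_dist.1 hs
    obtain ⟨v, hv, h⟩ := happrox (half_pos hε)
    refine ⟨poissonIntegral c R v,
      (harmonicOnSet_poissonIntegral hR hv).continuousOn.mono hsub, fun y hy ↦ hεs ?_⟩
    rw [Real.dist_eq]
    linarith [h y hy]
  have hconts := hcont.mono sphere_subset_closedBall
  have heq : ∀ w ∈ ball c (R / 2),
      poissonIntegral c (R / 2) (perronSolution U b) w = perronSolution U b w := by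
    intro w hw
    refine eq_of_forall_dist_le fun ε hε ↦ ?_
    obtain ⟨v, hv, h⟩ := happrox (half_pos hε)
    obtain ⟨F, hF, hFre⟩ := exists_differentiableOn_re_eq_poissonIntegral hR hv
    have hFc : DiffContOnCl ℂ F (ball c (R / 2)) :=
      (hF.mono (closure_ball_subset_closedBall.trans hsub)).diffContOnCl
    have h1 := poissonIntegral_eq_of_re hw hFc
    have h2 : |poissonIntegral c (R / 2) (perronSolution U b) w -
        poissonIntegral c (R / 2) (fun z ↦ (F z).re) w| ≤ ε / 2 := by
      refine abs_poissonIntegral_sub_le hw hconts (Complex.continuous_re.comp_continuousOn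
        (hF.continuousOn.mono (sphere_subset_closedBall.trans hsub))) fun z hz ↦ ?_
      rw [Function.comp_apply, hFre z (hsub (sphere_subset_closedBall hz))]
      exact h z (sphere_subset_closedBall hz)
    have h3 := h w (ball_subset_closedBall hw)
    rw [h1, hFre w (hsub (ball_subset_closedBall hw))] at h2
    rw [Real.dist_eq]
    rw [abs_le] at *
    constructor <;> linarith
  obtain ⟨F, hF, hFre⟩ := exists_differentiableOn_re_eq_poissonIntegral hR2 hconts
  exact ⟨ball c (R / 2), isOpen_ball, mem_ball_self hR2,
    ball_subset_closedBall.trans (hsub.trans (ball_subset_closedBall.trans hball)), F, hF,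
    fun w hw ↦ (hFre w hw).trans (heq w hw)⟩

/-- A barrier for `U` at `ζ` at scale `r`. -/
structure IsBarrier (U : Set ℂ) (ζ : ℂ) (r : ℝ) (V : ℂ → ℝ) : Prop where
  subharmonicOnSet_neg : SubharmonicOnSet (fun z ↦ -V z) U
  nonneg : ∀ z ∈ U, 0 ≤ V z
  eq_one : ∀ z ∈ U, z ∉ ball ζ r → V z = 1
  tendsto : Tendsto V (𝓝[U] ζ) (𝓝 0)

theorem tendsto_perronSolution (hU : IsOpen U) (hUb : Bornology.IsBounded U)
    (hM : ∀ ξ ∈ frontier U, |b ξ| ≤ M) (hb : ContinuousOn b (frontier U)) {ζ : ℂ}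
    (hζ : ζ ∈ frontier U) (hbar : ∀ r > 0, ∃ V, IsBarrier U ζ r V) :
    Tendsto (perronSolution U b) (𝓝[U] ζ) (𝓝 (b ζ)) := by
  have hM0 : 0 ≤ M := (abs_nonneg _).trans (hM ζ hζ)
  have hMζ := abs_le.1 (hM ζ hζ)
  rw [Metric.tendsto_nhds]
  intro ε hε
  obtain ⟨δ, hδ, hδb⟩ := Metric.continuousOn_iff.1 hb ζ hζ (ε / 2) (by positivity)
  obtain ⟨V, hV⟩ := hbar (δ / 2) (by positivity)
  have hfar : ∀ ξ, δ ≤ dist ξ ζ → ∀ᶠ z in 𝓝[U] ξ, V z = 1 := by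
    intro ξ hξ
    have hξ' : ξ ∉ closedBall ζ (δ / 2) := by
      rw [mem_closedBall]
      linarith
    filter_upwards [self_mem_nhdsWithin,
      mem_nhdsWithin_of_mem_nhds (isClosed_closedBall.isOpen_compl.mem_nhds hξ')] with z h1 h2
    exact hV.eq_one z h1 fun h ↦ h2 (ball_subset_closedBall h)
  have hup : ∀ z ∈ U, perronSolution U b z ≤ b ζ + ε / 2 + 2 * M * V z := by
    intro z hz
    refine perronSolution_le hM fun v hv ↦ ?_
    have hsub := (hv.1.add hU (.const (-(b ζ + ε / 2)) U)).add hU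
      (hV.subharmonicOnSet_neg.const_mul (mul_nonneg zero_le_two hM0))
    have h := hsub.nonpos_of_frontier hU hUb (fun ξ hξ η hη ↦ ?_) hz
    · linarith
    · by_cases hξζ : dist ξ ζ < δ
      · have h1 := abs_lt.1 (Real.dist_eq _ _ ▸ hδb ξ hξ hξζ)
        filter_upwards [hv.2 ξ hξ η hη, self_mem_nhdsWithin] with x hx hxU
        have := mul_nonneg (mul_nonneg zero_le_two hM0) (hV.nonneg x hxU)
        linarith
      · have h1 := abs_le.1 (hM ξ hξ)
        filter_upwards [hv.2 ξ hξ η hη, hfar ξ (not_lt.1 hξζ)] with x hx hxV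
        rw [hxV]
        linarith
  have hlow : ∀ z ∈ U, b ζ - ε / 2 - 2 * M * V z ≤ perronSolution U b z := by
    intro z hz
    have hmem : (fun z ↦ b ζ - ε / 2 + 2 * M * -V z) ∈ perronFamily U b := by
      refine ⟨(SubharmonicOnSet.const (b ζ - ε / 2) U).add hU
        (hV.subharmonicOnSet_neg.const_mul (mul_nonneg zero_le_two hM0)), fun ξ hξ η hη ↦ ?_⟩
      by_cases hξζ : dist ξ ζ < δ
      · have h1 := abs_lt.1 (Real.dist_eq _ _ ▸ hδb ξ hξ hξζ)
        filter_upwards [self_mem_nhdsWithin] with x hxU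
        have := mul_nonneg (mul_nonneg zero_le_two hM0) (hV.nonneg x hxU)
        linarith
      · have h1 := abs_le.1 (hM ξ hξ)
        filter_upwards [hfar ξ (not_lt.1 hξζ)] with x hxV
        rw [hxV]
        linarith
    have := le_perronSolution hU hUb hM hmem hz
    linarith
  have hlim : Tendsto (fun z ↦ 2 * M * V z) (𝓝[U] ζ) (𝓝 0) := by
    simpa using hV.tendsto.const_mul (2 * M)
  filter_upwards [hlim.eventually (gt_mem_nhds (half_pos hε)), self_mem_nhdsWithin] with z h1 hz
  rw [Real.dist_eq, abs_lt]
  constructor <;> linarith [hup z hz, hlow z hz]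

end Perron

/-- A holomorphically simply connected domain omitting `ζ` carries a holomorphic branch of
`log (z - ζ)`. -/
lemma HolSC.exists_log {U : Set ℂ} (hU : HolSC U) (hUo : IsOpen U) (hUc : IsConnected U) {ζ : ℂ}
    (hζ : ζ ∉ U) :
    ∃ L : ℂ → ℂ, ∀ z ∈ U, HasDerivAt L (z - ζ)⁻¹ z ∧ Complex.exp (L z) = z - ζ := by
  have hne : ∀ z ∈ U, z - ζ ≠ 0 := fun z hz h ↦ hζ (sub_eq_zero.1 h ▸ hz)
  obtain ⟨G, -, hG⟩ := hU (fun z ↦ (z - ζ)⁻¹) fun z hz ↦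
    ((differentiableAt_id.sub_const ζ).inv (hne z hz)).differentiableWithinAt
  have hq : ∀ z ∈ U, HasDerivAt (fun z ↦ Complex.exp (-G z) * (z - ζ)) 0 z := by
    intro z hz
    convert! ((hG z hz).neg.cexp.mul ((hasDerivAt_id z).sub_const ζ)) using 1
    have := hne z hz
    simp only [Pi.neg_apply, id]
    field_simp
    ring
  obtain ⟨k, hk⟩ := hUo.exists_is_const_of_deriv_eq_zero hUc.isPreconnected
    (fun z hz ↦ (hq z hz).differentiableAt.differentiableWithinAt) fun z hz ↦ (hq z hz).deriv
  obtain ⟨z₀, hz₀⟩ := hUc.nonempty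
  have hk0 : k ≠ 0 := by
    rw [← hk z₀ hz₀]
    exact mul_ne_zero (Complex.exp_ne_zero _) (hne z₀ hz₀)
  refine ⟨fun z ↦ G z + Complex.log k, fun z hz ↦ ⟨(hG z hz).add_const _, ?_⟩⟩
  rw [Complex.exp_add, Complex.exp_log hk0, ← hk z hz, ← mul_assoc, ← Complex.exp_add]
  simp

section CauchyTransform

open MeasureTheory

variable {μ : Measure ℝ} {a : ℝ → ℂ} {ρ : ℝ} {w : ℂ}

lemma sub_re_le_norm_sub {u w : ℂ} (hu : u.re = ρ) : ρ - w.re ≤ ‖u - w‖ := by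
  have h := Complex.re_le_norm (u - w)
  rwa [Complex.sub_re, hu] at h

lemma re_inv_sub {u w : ℂ} (hu : u.re = ρ) :
    ((u - w)⁻¹).re = (ρ - w.re) / ((ρ - w.re) ^ 2 + (u.im - w.im) ^ 2) := by
  rw [Complex.inv_re, Complex.normSq_apply, Complex.sub_re, Complex.sub_im, hu]
  ring

lemma integrable_inv_sub [IsFiniteMeasure μ] (ha : AEStronglyMeasurable a μ)
    (hρ : ∀ᵐ θ ∂μ, (a θ).re = ρ) (hw : w.re < ρ) : Integrable (fun θ ↦ (a θ - w)⁻¹) μ := by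
  refine .of_bound (ha.sub aestronglyMeasurable_const).inv₀ (ρ - w.re)⁻¹ ?_
  filter_upwards [hρ] with θ hθ
  rw [norm_inv]
  exact inv_anti₀ (sub_pos.2 hw) (sub_re_le_norm_sub hθ)

lemma differentiableOn_integral_inv_sub [IsFiniteMeasure μ] (ha : AEStronglyMeasurable a μ)
    (hρ : ∀ᵐ θ ∂μ, (a θ).re = ρ) :
    DifferentiableOn ℂ (fun w ↦ ∫ θ, (a θ - w)⁻¹ ∂μ) {w | w.re < ρ} := by
  intro w₀ hw₀
  set s := (ρ - w₀.re) / 2 with hs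
  have hw₀' : w₀.re < ρ := hw₀
  have hs0 : 0 < s := by simp only [hs]; linarith
  have hball : ∀ w ∈ ball w₀ s, s ≤ ρ - w.re := by
    intro w hw
    have h := (Complex.re_le_norm (w - w₀)).trans_lt (mem_ball_iff_norm.1 hw)
    rw [Complex.sub_re] at h
    simp only [hs] at h ⊢
    linarith
  have hmeas : ∀ w, AEStronglyMeasurable (fun θ ↦ (a θ - w)⁻¹) μ := fun w ↦
    (ha.sub aestronglyMeasurable_const).inv₀
  have hmeas' : AEStronglyMeasurable (fun θ ↦ (a θ - w₀)⁻¹ ^ 2) μ := (hmeas w₀).pow 2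
  have hbound : ∀ᵐ θ ∂μ, ∀ w ∈ ball w₀ s, ‖(a θ - w)⁻¹ ^ 2‖ ≤ s⁻¹ ^ 2 := by
    filter_upwards [hρ] with θ hθ w hw
    rw [norm_pow, norm_inv]
    have h := (hball w hw).trans (sub_re_le_norm_sub hθ)
    gcongr
  have hderiv : ∀ᵐ θ ∂μ, ∀ w ∈ ball w₀ s,
      HasDerivAt (fun w ↦ (a θ - w)⁻¹) ((a θ - w)⁻¹ ^ 2) w := by
    filter_upwards [hρ] with θ hθ w hw
    have hne : a θ - w ≠ 0 :=
      norm_pos_iff.1 (hs0.trans_le ((hball w hw).trans (sub_re_le_norm_sub hθ)))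
    have h := ((hasDerivAt_id w).const_sub (a θ)).fun_inv hne
    simp only [id, neg_neg, one_div, ← inv_pow] at h
    exact h
  exact (hasDerivAt_integral_of_dominated_loc_of_deriv_le (ball_mem_nhds w₀ hs0)
    (.of_forall hmeas) (integrable_inv_sub ha hρ hw₀') hmeas' hbound (integrable_const _)
    hderiv).2.differentiableAt.differentiableWithinAt

lemma re_integral_inv_sub [IsFiniteMeasure μ] (ha : AEStronglyMeasurable a μ)
    (hρ : ∀ᵐ θ ∂μ, (a θ).re = ρ) (hw : w.re < ρ) :
    (∫ θ, (a θ - w)⁻¹ ∂μ).re = ∫ θ, ((a θ - w)⁻¹).re ∂μ :=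
  (Complex.reCLM.integral_comp_comm (integrable_inv_sub ha hρ hw)).symm

lemma re_inv_sub_nonneg {u : ℂ} (hu : u.re = ρ) (hw : w.re < ρ) : 0 ≤ ((u - w)⁻¹).re := by
  rw [re_inv_sub hu]
  exact div_nonneg (sub_pos.2 hw).le (by positivity)

lemma re_integral_inv_sub_nonneg [IsFiniteMeasure μ] (ha : AEStronglyMeasurable a μ)
    (hρ : ∀ᵐ θ ∂μ, (a θ).re = ρ) (hw : w.re < ρ) : 0 ≤ (∫ θ, (a θ - w)⁻¹ ∂μ).re := by
  rw [re_integral_inv_sub ha hρ hw]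
  exact integral_nonneg_of_ae (hρ.mono fun θ hθ ↦ re_inv_sub_nonneg hθ hw)

lemma re_integral_inv_sub_le [IsFiniteMeasure μ]
    (hρ : ∀ᵐ θ ∂μ, (a θ).re = ρ) (hw : w.re < ρ) :
    (∫ θ, (a θ - w)⁻¹ ∂μ).re ≤ μ.real Set.univ / (ρ - w.re) := by
  refine (Complex.re_le_norm _).trans ?_
  refine (norm_integral_le_of_norm_le_const (C := (ρ - w.re)⁻¹) ?_).trans_eq
    (by rw [div_eq_mul_inv, mul_comm])
  filter_upwards [hρ] with θ hθ
  rw [norm_inv]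
  exact inv_anti₀ (sub_pos.2 hw) (sub_re_le_norm_sub hθ)

lemma half_le_re_integral_inv_sub {E : Set ℝ} [IsFiniteMeasure (volume.restrict E)]
    (hE : MeasurableSet E) (ha : AEStronglyMeasurable a (volume.restrict E))
    (hρ : ∀ θ ∈ E, (a θ).re = ρ) (hw : w.re < ρ) {t : ℝ} (hsub : Set.Ioo t (t + (ρ - w.re)) ⊆ E)
    (him : ∀ θ ∈ Set.Ioo t (t + (ρ - w.re)), (a θ).im - w.im = θ - t) :
    1 / 2 ≤ (∫ θ in E, (a θ - w)⁻¹).re := by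
  have hρ' : ∀ᵐ θ ∂(volume.restrict E), (a θ).re = ρ := ae_restrict_of_forall_mem hE hρ
  have hs : 0 < ρ - w.re := sub_pos.2 hw
  set s := ρ - w.re with hs_def
  have hint : IntegrableOn (fun θ ↦ ((a θ - w)⁻¹).re) E := (integrable_inv_sub ha hρ' hw).re
  rw [re_integral_inv_sub ha hρ' hw]
  calc (1 / 2 : ℝ) = ∫ _ in Set.Ioo t (t + s), 1 / (2 * s) := by
        rw [setIntegral_const, measureReal_def, Real.volume_Ioo, add_sub_cancel_left,
          ENNReal.toReal_ofReal hs.le, smul_eq_mul]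
        field_simp
    _ ≤ ∫ θ in Set.Ioo t (t + s), ((a θ - w)⁻¹).re := by
        refine setIntegral_mono_on (integrableOn_const measure_Ioo_lt_top.ne) (hint.mono_set hsub)
          measurableSet_Ioo fun θ hθ ↦ ?_
        rw [re_inv_sub (hρ θ (hsub hθ)), him θ hθ, ← hs_def]
        have h1 : 0 ≤ θ - t := by linarith [hθ.1]
        have h2 : θ - t ≤ s := by linarith [hθ.2]
        rw [div_le_div_iff₀ (by positivity) (by positivity)]
        nlinarith
    _ ≤ ∫ θ in E, ((a θ - w)⁻¹).re :=
        setIntegral_mono_set hint (hρ'.mono fun θ hθ ↦ re_inv_sub_nonneg hθ hw)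
          hsub.eventuallyLE

end CauchyTransform

section Barrier

open MeasureTheory

variable {U : Set ℂ} {ζ ξ : ℂ} {r : ℝ} {L : ℂ → ℂ}

lemma re_eq_log_norm_of_exp_eq {u v : ℂ} (h : Complex.exp u = v) : u.re = Real.log ‖v‖ := by
  rw [← h, Complex.norm_exp, Real.log_exp]

/-- The angles, in a window slightly longer than a period, of the points of `U` on a circle. -/
def circleAngles (U : Set ℂ) (ζ : ℂ) (r : ℝ) : Set ℝ :=
  Set.Ioo (-1) 7 ∩ circleMap ζ r ⁻¹' U

lemma isOpen_circleAngles (hU : IsOpen U) : IsOpen (circleAngles U ζ r) :=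
  isOpen_Ioo.inter (hU.preimage (continuous_circleMap ζ r))

lemma volume_circleAngles_le : volume (circleAngles U ζ r) ≤ ENNReal.ofReal 8 := by
  refine (measure_mono Set.inter_subset_left).trans ?_
  rw [Real.volume_Ioo]
  norm_num

instance : IsFiniteMeasure (volume.restrict (circleAngles U ζ r)) :=
  isFiniteMeasure_restrict.2 (volume_circleAngles_le.trans_lt ENNReal.ofReal_lt_top).ne

/-- If `L` is a branch of `log (z - ζ)`, the real part of this function is comparable to the
harmonic measure of the part of the circle `|z - ζ| = r` lying in `U`. -/
noncomputable def circleCauchyTransform (U : Set ℂ) (ζ : ℂ) (r : ℝ) (L : ℂ → ℂ) (z : ℂ) : ℂ :=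
  ∫ θ in circleAngles U ζ r, (L (circleMap ζ r θ) - L z)⁻¹

lemma re_branch_circleMap (hr : 0 < r) (hL : ∀ z ∈ U, Complex.exp (L z) = z - ζ) {θ : ℝ}
    (hθ : θ ∈ circleAngles U ζ r) : (L (circleMap ζ r θ)).re = Real.log r := by
  rw [re_eq_log_norm_of_exp_eq (hL _ hθ.2), circleMap_sub_center, norm_circleMap_zero,
    abs_of_pos hr]

lemma re_branch_lt (hζ : ζ ∉ U) (hL : ∀ z ∈ U, Complex.exp (L z) = z - ζ) {z : ℂ} (hz : z ∈ U)
    (hzr : z ∈ ball ζ r) : (L z).re < Real.log r := by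
  rw [re_eq_log_norm_of_exp_eq (hL z hz)]
  refine Real.log_lt_log (norm_pos_iff.2 fun h ↦ hζ (sub_eq_zero.1 h ▸ hz)) ?_
  exact mem_ball_iff_norm.1 hzr

lemma aestronglyMeasurable_branch_circleMap (hU : IsOpen U) (hL : ContinuousOn L U) :
    AEStronglyMeasurable (fun θ ↦ L (circleMap ζ r θ)) (volume.restrict (circleAngles U ζ r)) :=
  (hL.comp (continuous_circleMap ζ r).continuousOn fun _ hθ ↦ hθ.2).aestronglyMeasurable
    (isOpen_circleAngles hU).measurableSet

/-- Near a point of `U` on the circle, the real part of the transform is at least `1 / 2` inside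
the disc. -/
lemma eventually_half_le_circleCauchyTransform (hU : IsOpen U) (hζ : ζ ∉ U) (hr : 0 < r)
    (hL : ∀ z ∈ U, HasDerivAt L (z - ζ)⁻¹ z ∧ Complex.exp (L z) = z - ζ) (hξ : ξ ∈ U)
    (hξr : ξ ∈ sphere ζ r) :
    ∀ᶠ x in 𝓝 ξ, x ∈ ball ζ r → 1 / 2 ≤ (circleCauchyTransform U ζ r L x).re := by
  have hLc : ContinuousOn L U := fun z hz ↦ (hL z hz).1.continuousAt.continuousWithinAt
  have hLexp : ∀ z ∈ U, Complex.exp (L z) = z - ζ := fun z hz ↦ (hL z hz).2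
  obtain ⟨θ₀, hθ₀, rfl⟩ : ξ ∈ circleMap ζ r '' Set.Ioc 0 (2 * π) := by
    rwa [image_circleMap_Ioc, abs_of_pos hr]
  have hθ₀E : θ₀ ∈ circleAngles U ζ r :=
    ⟨⟨by linarith [hθ₀.1], by linarith [hθ₀.2, Real.pi_lt_d2]⟩, hξ⟩
  obtain ⟨δ, hδ, hδE⟩ := Metric.isOpen_iff.1 (isOpen_circleAngles hU) θ₀ hθ₀E
  have hderiv : ∀ θ ∈ ball θ₀ δ,
      HasDerivAt (fun θ : ℝ ↦ L (circleMap ζ r θ) - θ * Complex.I) 0 θ := by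
    intro θ hθ
    have h1 := ((hL _ (hδE hθ).2).1.scomp θ (hasDerivAt_circleMap ζ r θ)).sub
      ((Complex.ofRealCLM.hasDerivAt (x := θ)).mul_const Complex.I)
    convert! h1 using 1
    have : circleMap 0 r θ ≠ 0 := by simpa using hr.ne'
    rw [circleMap_sub_center]
    simp only [smul_eq_mul, Complex.ofRealCLM_apply, Complex.ofReal_one]
    field_simp
    ring
  obtain ⟨k, hk⟩ := isOpen_ball.exists_is_const_of_deriv_eq_zero
    (convex_ball θ₀ δ).isPreconnected
    (fun θ hθ ↦ (hderiv θ hθ).differentiableAt.differentiableWithinAt)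
    fun θ hθ ↦ (hderiv θ hθ).deriv
  have him : ∀ θ ∈ ball θ₀ δ, (L (circleMap ζ r θ)).im - (L (circleMap ζ r θ₀)).im = θ - θ₀ := by
    intro θ hθ
    have h := congrArg Complex.im ((hk θ hθ).trans (hk θ₀ (mem_ball_self hδ)).symm)
    simp only [Complex.sub_im, Complex.mul_im, Complex.ofReal_re, Complex.I_im, mul_one,
      Complex.ofReal_im, Complex.I_re, mul_zero, add_zero] at h
    linarith
  have hnear := (hL _ hξ).1.continuousAt.eventually (ball_mem_nhds _ (half_pos hδ))
  filter_upwards [hnear, hU.mem_nhds hξ] with x hx hxU hxr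
  have hx' := mem_ball_iff_norm.1 hx
  have h1 := (Complex.abs_re_le_norm _).trans_lt hx'
  have h2 := (Complex.abs_im_le_norm _).trans_lt hx'
  rw [Complex.sub_re, re_branch_circleMap hr hLexp hθ₀E, abs_lt] at h1
  rw [Complex.sub_im, abs_lt] at h2
  have hsub : Set.Ioo (θ₀ + (L x).im - (L (circleMap ζ r θ₀)).im)
      (θ₀ + (L x).im - (L (circleMap ζ r θ₀)).im + (Real.log r - (L x).re)) ⊆ ball θ₀ δ := by
    intro θ hθ
    rw [Real.ball_eq_Ioo]
    constructor <;> linarith [hθ.1, hθ.2]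
  refine half_le_re_integral_inv_sub (isOpen_circleAngles hU).measurableSet
    (aestronglyMeasurable_branch_circleMap hU hLc) (fun θ hθ ↦ re_branch_circleMap hr hLexp hθ)
    (re_branch_lt hζ hLexp hxU hxr) (hsub.trans hδE) fun θ hθ ↦ ?_
  linarith [him θ (hsub hθ)]

theorem HolSC.exists_isBarrier (hU : HolSC U) (hUo : IsOpen U) (hUc : IsConnected U)
    (hζ : ζ ∉ U) (hr : 0 < r) : ∃ V, IsBarrier U ζ r V := by
  obtain ⟨L, hL⟩ := hU.exists_log hUo hUc hζ
  have hLc : ContinuousOn L U := fun z hz ↦ (hL z hz).1.continuousAt.continuousWithinAt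
  have hLd : DifferentiableOn ℂ L U := fun z hz ↦
    (hL z hz).1.differentiableAt.differentiableWithinAt
  have hLexp : ∀ z ∈ U, Complex.exp (L z) = z - ζ := fun z hz ↦ (hL z hz).2
  have hmeas := aestronglyMeasurable_branch_circleMap (ζ := ζ) (r := r) hUo hLc
  have hρ : ∀ᵐ θ ∂volume.restrict (circleAngles U ζ r),
      (L (circleMap ζ r θ)).re = Real.log r :=
    ae_restrict_of_forall_mem (isOpen_circleAngles hUo).measurableSet
      fun θ hθ ↦ re_branch_circleMap hr hLexp hθ
  have hlt : ∀ z ∈ U ∩ ball ζ r, (L z).re < Real.log r := fun z hz ↦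
    re_branch_lt hζ hLexp hz.1 hz.2
  have hD : IsOpen (U ∩ ball ζ r) := hUo.inter isOpen_ball
  set H := circleCauchyTransform U ζ r L
  have hHd : DifferentiableOn ℂ H (U ∩ ball ζ r) :=
    (differentiableOn_integral_inv_sub hmeas hρ).comp (hLd.mono Set.inter_subset_left) hlt
  set V : ℂ → ℝ := fun z ↦ if z ∈ ball ζ r then min 1 (2 * (H z).re) else 1
  have hVin : ∀ z ∈ ball ζ r, V z = min 1 (2 * (H z).re) := fun z hz ↦ if_pos hz
  have hVout : ∀ z ∉ ball ζ r, V z = 1 := fun z hz ↦ if_neg hz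
  have hVle : ∀ z, V z ≤ 1 := by
    intro z
    by_cases hz : z ∈ ball ζ r
    · exact (hVin z hz).trans_le (min_le_left _ _)
    · exact (hVout z hz).le
  have hsub : SubharmonicOnSet (fun z ↦ max (-1) (-(2 * (H z).re))) (U ∩ ball ζ r) :=
    SubharmonicOnSet.max hD (.const _ _) (HarmonicOnSet.of_re (F := fun z ↦ -(2 * H z)) hD
      (hHd.const_mul 2).neg fun z _ ↦ by simp).subharmonicOnSet
  have hnegV : ∀ z ∈ ball ζ r, -V z = max (-1) (-(2 * (H z).re)) := fun z hz ↦ by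
    rw [hVin z hz, max_neg_neg]
  have hVc : ContinuousOn (fun z ↦ -V z) U := by
    intro z hz
    refine ContinuousAt.continuousWithinAt ?_
    by_cases hzr : z ∈ ball ζ r
    · exact (hsub.continuousOn.continuousAt (hD.mem_nhds ⟨hz, hzr⟩)).congr
        (eventually_of_mem (isOpen_ball.mem_nhds hzr) fun x hx ↦ (hnegV x hx).symm)
    · have hhalf : ∀ᶠ x in 𝓝 z, x ∈ ball ζ r → 1 / 2 ≤ (H x).re := by
        rcases (not_lt.1 fun h ↦ hzr (mem_ball.2 h) : r ≤ dist z ζ).eq_or_lt with h | h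
        · exact eventually_half_le_circleCauchyTransform hUo hζ hr hL hz
            (mem_sphere.2 h.symm)
        · filter_upwards [isClosed_closedBall.isOpen_compl.mem_nhds
            (show z ∉ closedBall ζ r from fun h' ↦ h.not_ge (mem_closedBall.1 h'))] with x hx hx'
          exact absurd (ball_subset_closedBall hx') hx
      refine (continuousAt_const (y := (-1 : ℝ))).congr ?_
      filter_upwards [hhalf] with x hx
      by_cases hxr : x ∈ ball ζ r
      · rw [hVin x hxr, min_eq_left (by linarith [hx hxr])]
      · rw [hVout x hxr]
  refine ⟨V, ⟨hVc, fun z hz ↦ ?_⟩, fun z hz ↦ ?_, fun z _ hzr ↦ hVout z hzr, ?_⟩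
  · by_cases hzr : z ∈ ball ζ r
    · filter_upwards [hsub.le_circleAverage z ⟨hz, hzr⟩,
        isOpen_ball.eventually_closedBall_subset hzr] with s h1 ⟨hs, hsr⟩
      rw [hnegV z hzr]
      refine h1.trans_eq (circleAverage_congr_sphere fun x hx ↦ ?_)
      rw [abs_of_pos hs] at hx
      exact (hnegV x (hsr (sphere_subset_closedBall hx))).symm
    · filter_upwards [hUo.eventually_closedBall_subset hz] with s ⟨hs, hsU⟩
      rw [hVout z hzr, ← circleAverage_const (-1 : ℝ) z s]
      exact circleAverage_mono (circleIntegrable_const _ _ _)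
        (hVc.circleIntegrable_of_closedBall_subset hs hsU) fun x _ ↦ neg_le_neg (hVle x)
  · by_cases hzr : z ∈ ball ζ r
    · rw [hVin z hzr]
      exact le_min zero_le_one (mul_nonneg zero_le_two
        (re_integral_inv_sub_nonneg hmeas hρ (hlt z ⟨hz, hzr⟩)))
    · rw [hVout z hzr]
      exact zero_le_one
  · have hlog : Tendsto (fun z ↦ -Real.log ‖z - ζ‖) (𝓝[U] ζ) atTop :=
      tendsto_neg_atBot_atTop.comp (Real.tendsto_log_nhdsGT_zero.comp
        ((tendsto_norm_sub_self_nhdsNE ζ).mono_left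
          (nhdsWithin_mono ζ fun z hz h ↦ hζ (h ▸ hz))))
    have hbound : Tendsto (fun z ↦ 16 / (Real.log r - Real.log ‖z - ζ‖)) (𝓝[U] ζ) (𝓝 0) :=
      Tendsto.const_div_atTop (by
        simpa only [sub_eq_add_neg] using tendsto_atTop_add_const_left _ (Real.log r) hlog) _
    have hev : ∀ᶠ z in 𝓝[U] ζ, z ∈ U ∩ ball ζ r := by
      filter_upwards [self_mem_nhdsWithin, mem_nhdsWithin_of_mem_nhds (ball_mem_nhds ζ hr)]
        with z h1 h2 using ⟨h1, h2⟩
    refine tendsto_of_tendsto_of_tendsto_of_le_of_le' tendsto_const_nhds hbound ?_ ?_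
    · filter_upwards [hev] with z hz
      rw [hVin z hz.2]
      exact le_min zero_le_one (mul_nonneg zero_le_two
        (re_integral_inv_sub_nonneg hmeas hρ (hlt z hz)))
    · filter_upwards [hev] with z hz
      have h1 := hlt z hz
      have h2 : (H z).re ≤ _ := re_integral_inv_sub_le hρ h1
      have h3 : (volume.restrict (circleAngles U ζ r)).real Set.univ ≤ 8 := by
        rw [measureReal_def, Measure.restrict_apply_univ]
        exact ENNReal.toReal_le_of_le_ofReal (by norm_num) volume_circleAngles_le
      have h4 : 0 < Real.log r - (L z).re := sub_pos.2 h1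
      rw [hVin z hz.2, ← re_eq_log_norm_of_exp_eq (hLexp z hz.1)]
      refine (min_le_right _ _).trans ?_
      calc 2 * (H z).re ≤ 2 * (8 / (Real.log r - (L z).re)) := by
            gcongr
            exact h2.trans (by gcongr)
        _ = 16 / (Real.log r - (L z).re) := by ring

end Barrier

/-- On a bounded holomorphically simply connected domain, the Dirichlet problem
is solvable for every continuous boundary function `b`. -/
theorem holSC_dirichlet_solvable (U : Set ℂ) (hUopen : IsOpen U)
    (hUconn : IsConnected U) (hUbdd : Bornology.IsBounded U) (hU : HolSC U)
    (b : ℂ → ℝ) (hb : ContinuousOn b (frontier U)) :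
    ∃ h : ℂ → ℝ, HarmonicOnSet h U ∧
      ContinuousOn (fun z => if z ∈ U then h z else b z) (closure U) := by
  have hcompact : IsCompact (frontier U) :=
    hUbdd.isCompact_closure.of_isClosed_subset isClosed_frontier frontier_subset_closure
  obtain ⟨M, hM⟩ := hcompact.exists_bound_of_continuousOn hb
  have hharm := harmonicOnSet_perronSolution hUopen hUbdd hM
  have hnotMem : ∀ ζ ∈ frontier U, ζ ∉ U := fun ζ hζ ↦ by
    rw [hUopen.frontier_eq] at hζ
    exact hζ.2
  refine ⟨perronSolution U b, hharm, ?_⟩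
  refine ContinuousOn.if' (p := fun z ↦ z ∈ U) ?_ ?_ ?_ ?_
  · rintro ζ ⟨-, hζ⟩
    rw [if_neg (hnotMem ζ hζ)]
    exact (tendsto_perronSolution hUopen hUbdd hM hb hζ fun r hr ↦
      hU.exists_isBarrier hUopen hUconn (hnotMem ζ hζ) hr).mono_left
      (nhdsWithin_mono ζ Set.inter_subset_right)
  · rintro ζ ⟨-, hζ⟩
    rw [if_neg (hnotMem ζ hζ)]
    refine (hb ζ hζ).mono_left (nhdsWithin_mono ζ ?_)
    rw [hUopen.frontier_eq]
    exact fun z hz ↦ hz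
  · exact hharm.continuousOn.mono Set.inter_subset_right
  · refine hb.mono ?_
    rw [hUopen.frontier_eq]
    exact fun z hz ↦ hz
end

section
/- Let U be a connected open subset of ℂ that is holomorphically simply connected, and let g : U → ℝ be harmonic. Then g has a harmonic conjugate on U: there exists a holomorphic function G on U with Re G(z) = g(z) for all z ∈ U (equivalently, a function ĝ : U → ℝ such that g + i·ĝ is holomorphic on U). -/
open Complex Topology in
/-- If `g` is near `z` the real part of `F`, then the complex gradient
`∂g/∂1 - I * ∂g/∂I` at `z` is the derivative of `F`. -/
theorem fderiv_one_sub_I_mul_fderiv_I_of_re_eq {g : ℂ → ℝ} {F : ℂ → ℂ} {F' z : ℂ}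
    (hF : HasDerivAt F F' z) (hre : (fun w ↦ (F w).re) =ᶠ[𝓝 z] g) :
    (fderiv ℝ g z 1 : ℂ) - I * fderiv ℝ g z I = F' := by
  have hg := (reCLM.hasFDerivAt.comp z (hF.hasFDerivAt.restrictScalars ℝ)).congr_of_eventuallyEq
    hre.symm
  rw [hg.fderiv]
  apply Complex.ext <;> simp

/-- On a holomorphically simply connected domain, every harmonic function has a
harmonic conjugate: it is (globally) the real part of a holomorphic function. -/
theorem holSC_harmonic_conjugate (U : Set ℂ) (hUopen : IsOpen U)
    (hUconn : IsConnected U) (hU : HolSC U) (g : ℂ → ℝ)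
    (hg : HarmonicOnSet g U) :
    ∃ G : ℂ → ℂ, DifferentiableOn ℂ G U ∧ ∀ z ∈ U, (G z).re = g z := by
  let p : ℂ → ℂ := fun z ↦ (fderiv ℝ g z 1 : ℂ) - Complex.I * fderiv ℝ g z Complex.I
  have hlocal : ∀ z ∈ U, ∃ F : ℂ → ℂ, AnalyticAt ℂ F z ∧
      (fun w ↦ (F w).re) =ᶠ[nhds z] g ∧ p =ᶠ[nhds z] deriv F := by
    intro z hz
    obtain ⟨V, hV, hzV, -, F, hF, hre⟩ := hg z hz
    have hre' : ∀ w ∈ V, (fun w ↦ (F w).re) =ᶠ[nhds w] g := fun w hw ↦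
      Filter.eventually_of_mem (hV.mem_nhds hw) hre
    exact ⟨F, hF.analyticAt (hV.mem_nhds hzV), hre' z hzV,
      Filter.eventually_of_mem (hV.mem_nhds hzV) fun w hw ↦
        fderiv_one_sub_I_mul_fderiv_I_of_re_eq
          (hF.differentiableAt (hV.mem_nhds hw)).hasDerivAt (hre' w hw)⟩
  obtain ⟨G, hGdiff, hG⟩ := hU p fun z hz ↦ by
    obtain ⟨F, hF, -, hp⟩ := hlocal z hz
    exact (hF.deriv.differentiableAt.congr_of_eventuallyEq hp).differentiableWithinAt
  have hderiv : ∀ z ∈ U, HasFDerivAt (fun w ↦ (G w).re - g w) (0 : ℂ →L[ℝ] ℝ) z := by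
    intro z hz
    obtain ⟨F, hF, hre, hp⟩ := hlocal z hz
    have hsub : HasDerivAt (fun w ↦ G w - F w) 0 z := by
      simpa [hp.eq_of_nhds] using (hG z hz).fun_sub hF.differentiableAt.hasDerivAt
    have hfderiv := Complex.reCLM.hasFDerivAt.comp z (hsub.hasFDerivAt.restrictScalars ℝ)
    refine (hfderiv.congr_of_eventuallyEq ?_).congr_fderiv ?_
    · filter_upwards [hre] with w hw
      simp [← hw]
    · ext
      simp
  obtain ⟨c, hc⟩ := hUopen.exists_is_const_of_fderiv_eq_zero hUconn.isPreconnected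
    (fun z hz ↦ (hderiv z hz).differentiableAt.differentiableWithinAt)
    (fun z hz ↦ (hderiv z hz).fderiv)
  refine ⟨fun z ↦ G z - c, hGdiff.sub_const _, fun z hz ↦ ?_⟩
  have := hc z hz
  simp only [Complex.sub_re, Complex.ofReal_re]
  linarith
end
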